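/- arXiv:1712.02454 — 4 statements merged into one kernel-verified Lean document; each statement's English description precedes it below -/
import Mathlib

section
/- Let h_1, ..., h_10 be the ten generating hives of H(3) (listed in the context), and let φ : C[x_1, ..., x_10] → C[z_{ij} : 1 ≤ j ≤ i ≤ 4] be the C-algebra homomorphism sending x_k to the monomial z^{h_k} = Π_{i,j} z_{ij}^{(h_k)_{ij}}. Then the kernel of φ is the ideal generated by the single binomial x_1 x_6 x_7 − x_5 x_10. In particular the hive algebra HA(3), defined as the image of φ, is isomorphic to C[x_1, ..., x_10] / ⟨x_1 x_6 x_7 − x_5 x_10⟩. -/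
open MvPolynomial

/-- The ten generating hives of the hive monoid `H(3)`, written as tuples
`(h₁₁, h₂₁, h₂₂, h₃₁, h₃₂, h₃₃, h₄₁, h₄₂, h₄₃, h₄₄)` of natural numbers. -/
def hive3Gens : Fin 10 → Fin 10 → ℕ :=
  ![![0,0,1,0,1,1,0,1,1,1],
    ![0,0,1,0,1,2,0,1,2,3],
    ![0,0,1,0,1,2,0,1,2,2],
    ![0,1,1,1,1,1,1,1,1,1],
    ![0,1,1,1,2,2,1,2,2,2],
    ![0,1,1,1,2,2,1,2,3,3],
    ![0,1,1,2,2,2,2,2,2,2],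
    ![0,1,1,2,2,2,2,3,3,3],
    ![0,1,1,2,2,2,3,3,3,3],
    ![0,1,2,2,3,3,2,3,4,4]]

/-- The `ℂ`-algebra homomorphism `φ : ℂ[x₁, ..., x₁₀] → ℂ[z_{ij} : 1 ≤ j ≤ i ≤ 4]`
sending `x_k` to the monomial `z^{h_k}` (the ten entries `z_{ij}` are indexed by
`Fin 10` in the order `z₁₁, z₂₁, z₂₂, z₃₁, z₃₂, z₃₃, z₄₁, z₄₂, z₄₃, z₄₄`). -/
noncomputable def φ3 : MvPolynomial (Fin 10) ℂ →ₐ[ℂ] MvPolynomial (Fin 10) ℂ :=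
  aeval (fun k => ∏ j : Fin 10, (X j : MvPolynomial (Fin 10) ℂ) ^ hive3Gens k j)

/-!
The kernel of a homomorphism sending variables to monomials is spanned by the binomials `x^a - x^b`
whose two terms have the same image. When the exponents of these binomials differ by multiples of a
single vector `u - v`, with `u` and `v` disjoint, we can write `a = d + n • u` and `b = d + n • v`
(up to exchanging `a` and `b`), so `x^a - x^b = x^d * ((x^u)^n - (x^v)^n)` is a multiple of
`x^u - x^v`. For the ten hives, Gaussian elimination shows that the integer relations are exactly
the multiples of `h₁ + h₆ + h₇ = h₅ + h₁₀`.
-/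

section MonomialHom

variable {σ M : Type*} [AddCommMonoid M] (R : Type*) [CommRing R] (w : σ → M)

/-- The `R`-algebra homomorphism sending the variable `x_i` to the monomial with exponent `w i`. The
exponents live in an arbitrary commutative monoid, so that the target is a monoid algebra; it is
`MvPolynomial τ R` when `M = τ →₀ ℕ`. Its kernel is the toric ideal of `w`. -/
noncomputable def monomialHom : MvPolynomial σ R →ₐ[R] AddMonoidAlgebra R M :=
  aeval fun i => AddMonoidAlgebra.single (w i) 1

variable {R}

theorem monomialHom_monomial (a : σ →₀ ℕ) (c : R) :
    monomialHom R w (monomial a c) = AddMonoidAlgebra.single (Finsupp.weight w a) c := by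
  have hprod : a.prod (fun i n => AddMonoidAlgebra.single (w i) (1 : R) ^ n) =
      AddMonoidAlgebra.single (Finsupp.weight w a) 1 := by
    simp only [Finsupp.prod, Finsupp.weight_apply, Finsupp.sum, AddMonoidAlgebra.single_pow,
      AddMonoidAlgebra.prod_single, one_pow, Finset.prod_const_one]
  rw [monomialHom, aeval_monomial, hprod, ← Algebra.smul_def, AddMonoidAlgebra.smul_single,
    smul_eq_mul, mul_one]

variable (R)

theorem ker_monomialHom :
    RingHom.ker (monomialHom R w) =
      Ideal.span {p | ∃ a b, Finsupp.weight w a = Finsupp.weight w b ∧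
        p = monomial a 1 - monomial b 1} := by
  set I : Ideal (MvPolynomial σ R) := Ideal.span _ with hI
  apply le_antisymm
  · -- Lifting each exponent in `M` to a chosen preimage inverts `monomialHom` modulo the binomials.
    let lift : AddMonoidAlgebra R M →ₗ[R] MvPolynomial σ R :=
      AddMonoidAlgebra.mapDomainLinearMap R R (Function.invFun (Finsupp.weight w))
    have sub_lift_mem (p : MvPolynomial σ R) : p - lift (monomialHom R w p) ∈ I := by
      induction p using MvPolynomial.induction_on' with
      | monomial a c =>
        have hlift : Finsupp.weight w a =
            Finsupp.weight w (Function.invFun (Finsupp.weight w) (Finsupp.weight w a)) :=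
          (Function.invFun_eq ⟨a, rfl⟩).symm
        have hC (s : σ →₀ ℕ) : monomial s c = C c * monomial s 1 := by
          rw [C_mul_monomial, mul_one]
        rw [monomialHom_monomial, AddMonoidAlgebra.mapDomainLinearMap_single, single_eq_monomial,
          hC a, hC (Function.invFun _ _), ← mul_sub]
        exact I.mul_mem_left _ (Ideal.subset_span ⟨_, _, hlift, rfl⟩)
      | add p q hp hq =>
        rw [map_add, map_add, add_sub_add_comm]
        exact I.add_mem hp hq
    intro p hp
    simpa only [RingHom.mem_ker.1 hp, map_zero, sub_zero] using sub_lift_mem p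
  · rw [hI, Ideal.span_le]
    rintro _ ⟨a, b, hab, rfl⟩
    rw [SetLike.mem_coe, RingHom.mem_ker, map_sub, monomialHom_monomial, monomialHom_monomial, hab,
      sub_self]

end MonomialHom

section Binomial

variable {σ : Type*} {a b u v : σ →₀ ℕ}

theorem exists_eq_add_nsmul_of_disjoint (huv : Disjoint u v) {n : ℕ}
    (h : ∀ i, (a i - b i : ℤ) = n * (u i - v i)) :
    ∃ d, a = d + n • u ∧ b = d + n • v := by
  have hzero (i : σ) : u i = 0 ∨ v i = 0 := by
    simpa [bot_eq_zero] using DFunLike.congr_fun huv.eq_bot i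
  have hle : n • u ≤ a := fun i => by
    have hi := h i
    simp only [Finsupp.smul_apply, smul_eq_mul]
    zify
    rcases hzero i with hu | hv
    · simp [hu]
    · simp only [hv, Nat.cast_zero, sub_zero] at hi
      linarith [(b i).cast_nonneg (α := ℤ)]
  refine ⟨a - n • u, (tsub_add_cancel_of_le hle).symm, ?_⟩
  ext i
  have hi := h i
  have hle_i := hle i
  simp only [Finsupp.add_apply, Finsupp.tsub_apply, Finsupp.smul_apply, smul_eq_mul] at hle_i ⊢
  zify [hle_i]
  linarith

theorem monomial_sub_monomial_dvd_add_nsmul (R : Type*) [CommRing R] (d : σ →₀ ℕ) (n : ℕ) :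
    (monomial u 1 - monomial v 1 : MvPolynomial σ R) ∣
      monomial (d + n • u) 1 - monomial (d + n • v) 1 := by
  have hmul (s : σ →₀ ℕ) :
      (monomial (d + n • s) 1 : MvPolynomial σ R) = monomial d 1 * monomial s 1 ^ n := by
    rw [monomial_pow, monomial_mul, one_pow, one_mul]
  rw [hmul, hmul, ← mul_sub]
  exact (sub_dvd_pow_sub_pow _ _ n).mul_left _

theorem monomial_sub_monomial_dvd_of_disjoint (R : Type*) [CommRing R] (huv : Disjoint u v) {n : ℤ}
    (h : ∀ i, (a i - b i : ℤ) = n * (u i - v i)) :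
    (monomial u 1 - monomial v 1 : MvPolynomial σ R) ∣ monomial a 1 - monomial b 1 := by
  obtain ⟨m, rfl | rfl⟩ := n.eq_nat_or_neg
  · obtain ⟨d, rfl, rfl⟩ := exists_eq_add_nsmul_of_disjoint huv h
    exact monomial_sub_monomial_dvd_add_nsmul R d m
  · have hswap (i : σ) : (b i - a i : ℤ) = m * (u i - v i) := by linarith [h i]
    obtain ⟨d, rfl, rfl⟩ := exists_eq_add_nsmul_of_disjoint huv hswap
    exact dvd_sub_comm.1 (monomial_sub_monomial_dvd_add_nsmul R d m)

theorem ker_monomialHom_eq_span_singleton {M : Type*} [AddCommMonoid M] (R : Type*) [CommRing R]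
    {w : σ → M} (huv : Disjoint u v) (hw : Finsupp.weight w u = Finsupp.weight w v)
    (hrel : ∀ a b : σ →₀ ℕ, Finsupp.weight w a = Finsupp.weight w b →
      ∃ n : ℤ, ∀ i, (a i - b i : ℤ) = n * (u i - v i)) :
    RingHom.ker (monomialHom R w) = Ideal.span {monomial u 1 - monomial v 1} := by
  rw [ker_monomialHom]
  apply le_antisymm
  · rw [Ideal.span_le]
    rintro _ ⟨a, b, hab, rfl⟩
    obtain ⟨n, hn⟩ := hrel a b hab
    exact Ideal.mem_span_singleton.2 (monomial_sub_monomial_dvd_of_disjoint R huv hn)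
  · exact Ideal.span_mono (Set.singleton_subset_iff.2 ⟨u, v, hw, rfl⟩)

end Binomial

/-- The generating hives as finitely supported functions, the exponents of the monomials `z^{h_k}`
to which `monomialHom` applies. -/
noncomputable def hive3Exponent (k : Fin 10) : Fin 10 →₀ ℕ :=
  Finsupp.equivFunOnFinite.symm (hive3Gens k)

/-- The exponent of `x₁x₆x₇`, the side `h₁ + h₆ + h₇` of the relation among the hives. -/
noncomputable def hive3Left : Fin 10 →₀ ℕ :=
  Finsupp.equivFunOnFinite.symm ![1, 0, 0, 0, 0, 1, 1, 0, 0, 0]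

/-- The exponent of `x₅x₁₀`, the side `h₅ + h₁₀` of the relation among the hives. -/
noncomputable def hive3Right : Fin 10 →₀ ℕ :=
  Finsupp.equivFunOnFinite.symm ![0, 0, 0, 0, 1, 0, 0, 0, 0, 1]

theorem disjoint_hive3Left_hive3Right : Disjoint hive3Left hive3Right := by
  rw [disjoint_iff]
  ext i
  fin_cases i <;> rfl

theorem weight_hive3Exponent_apply (a : Fin 10 →₀ ℕ) (j : Fin 10) :
    Finsupp.weight hive3Exponent a j = ∑ k, a k * hive3Gens k j := by
  simp [Finsupp.weight_eq_sum, hive3Exponent]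

theorem weight_hive3Left_eq_weight_hive3Right :
    Finsupp.weight hive3Exponent hive3Left = Finsupp.weight hive3Exponent hive3Right := by
  ext j
  rw [weight_hive3Exponent_apply, weight_hive3Exponent_apply]
  revert j
  decide

theorem eq_mul_of_sum_mul_hive3Gens_eq_zero {x : Fin 10 → ℤ}
    (hx : ∀ j, ∑ k, x k * hive3Gens k j = 0) (i : Fin 10) :
    x i = x 0 * (hive3Left i - hive3Right i) := by
  have hsub (j j' : Fin 10) : ∑ k, x k * (hive3Gens k j - hive3Gens k j') = 0 := by
    simp only [mul_sub, Finset.sum_sub_distrib, hx, sub_zero]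
  -- `hᵢⱼ` subtracts from the equation at `z_{ij}` the one at a neighbour in the triangle.
  have h₄₁ : x 8 = 0 := by simpa [Fin.sum_univ_succ, hive3Gens] using hsub 6 3
  have h₄₂ : x 7 + x 8 = 0 := by simpa [Fin.sum_univ_succ, hive3Gens] using hsub 7 4
  have h₄₄ : x 1 = 0 := by simpa [Fin.sum_univ_succ, hive3Gens] using hsub 9 8
  have h₃₃ : x 1 + x 2 = 0 := by simpa [Fin.sum_univ_succ, hive3Gens] using hsub 5 4
  have h₂₂ : x 0 + (x 1 + (x 2 + x 9)) = 0 := by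
    simpa [Fin.sum_univ_succ, hive3Gens] using hsub 2 1
  have h₃₁ : x 6 + (x 7 + (x 8 + x 9)) = 0 := by
    simpa [Fin.sum_univ_succ, hive3Gens] using hsub 3 1
  have h₄₃ : x 5 + (x 7 + (x 8 + x 9)) = 0 := by
    simpa [Fin.sum_univ_succ, hive3Gens] using hsub 8 5
  have h₃₂ : x 4 + (x 5 + (x 6 + (x 7 + (x 8 + x 9)))) = 0 := by
    simpa [Fin.sum_univ_succ, hive3Gens] using hsub 4 2
  have h₂₁ : x 3 + (x 4 + (x 5 + (x 6 + (x 7 + (x 8 + x 9))))) = 0 := by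
    simpa [Fin.sum_univ_succ, hive3Gens] using hx 1
  have hx₂ : x 2 = 0 := by linarith
  have hx₇ : x 7 = 0 := by linarith
  have hx₉ : x 9 = -x 0 := by linarith
  have hx₆ : x 6 = x 0 := by linarith
  have hx₅ : x 5 = x 0 := by linarith
  have hx₄ : x 4 = -x 0 := by linarith
  have hx₃ : x 3 = 0 := by linarith
  fin_cases i <;> simp [hive3Left, hive3Right, h₄₁, h₄₄, hx₂, hx₃, hx₄, hx₅, hx₆, hx₇, hx₉]

theorem exists_eq_mul_of_weight_hive3Exponent_eq (a b : Fin 10 →₀ ℕ)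
    (hab : Finsupp.weight hive3Exponent a = Finsupp.weight hive3Exponent b) :
    ∃ n : ℤ, ∀ i, (a i - b i : ℤ) = n * (hive3Left i - hive3Right i) := by
  refine ⟨a 0 - b 0, eq_mul_of_sum_mul_hive3Gens_eq_zero (x := fun i => a i - b i) fun j => ?_⟩
  have hj := DFunLike.congr_fun hab j
  rw [weight_hive3Exponent_apply, weight_hive3Exponent_apply] at hj
  simp only [sub_mul, Finset.sum_sub_distrib, sub_eq_zero]
  exact_mod_cast hj

section Presentation

variable (R : Type*) [CommRing R]

/-- The homomorphism `φ3` over an arbitrary commutative ring of coefficients. -/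
noncomputable def hive3Hom : MvPolynomial (Fin 10) R →ₐ[R] MvPolynomial (Fin 10) R :=
  aeval fun k => ∏ j : Fin 10, (X j : MvPolynomial (Fin 10) R) ^ hive3Gens k j

theorem hive3Hom_eq_monomialHom : hive3Hom R = monomialHom R hive3Exponent := by
  refine algHom_ext fun k => ?_
  rw [hive3Hom, monomialHom, aeval_X, aeval_X, single_eq_monomial, monomial_eq,
    Finsupp.prod_fintype _ _ fun _ => pow_zero _, C_1, one_mul]
  rfl

theorem monomial_hive3Left : monomial hive3Left (1 : R) = X 0 * X 5 * X 6 := by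
  rw [monomial_eq, Finsupp.prod_fintype _ _ fun _ => pow_zero _]
  simp [hive3Left, Fin.prod_univ_succ, mul_assoc]

theorem monomial_hive3Right : monomial hive3Right (1 : R) = X 4 * X 9 := by
  rw [monomial_eq, Finsupp.prod_fintype _ _ fun _ => pow_zero _]
  simp [hive3Right, Fin.prod_univ_succ]

theorem ker_hive3Hom :
    RingHom.ker (hive3Hom R) = Ideal.span {X 0 * X 5 * X 6 - X 4 * X 9} := by
  rw [hive3Hom_eq_monomialHom, ← monomial_hive3Left, ← monomial_hive3Right]
  exact ker_monomialHom_eq_span_singleton R disjoint_hive3Left_hive3Right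
    weight_hive3Left_eq_weight_hive3Right exists_eq_mul_of_weight_hive3Exponent_eq

theorem hive3_algebra_presentation_general :
    RingHom.ker (hive3Hom R) =
      Ideal.span {(X 0 * X 5 * X 6 - X 4 * X 9 : MvPolynomial (Fin 10) R)} ∧
    Nonempty ((MvPolynomial (Fin 10) R ⧸
        Ideal.span {(X 0 * X 5 * X 6 - X 4 * X 9 : MvPolynomial (Fin 10) R)})
      ≃ₐ[R] (hive3Hom R).range) := by
  refine ⟨ker_hive3Hom R, ?_⟩
  rw [← ker_hive3Hom R]
  exact ⟨Ideal.quotientKerEquivRange (hive3Hom R)⟩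

end Presentation

/-- The kernel of `φ` is the principal ideal generated by the binomial
`x₁x₆x₇ - x₅x₁₀`; in particular the hive algebra `HA(3)`, the image of `φ`, is
isomorphic to `ℂ[x₁, ..., x₁₀] / ⟨x₁x₆x₇ - x₅x₁₀⟩`. -/
theorem hive3_algebra_presentation :
    RingHom.ker φ3 =
      Ideal.span {(X 0 * X 5 * X 6 - X 4 * X 9 : MvPolynomial (Fin 10) ℂ)} ∧
    Nonempty ((MvPolynomial (Fin 10) ℂ ⧸
        Ideal.span {(X 0 * X 5 * X 6 - X 4 * X 9 : MvPolynomial (Fin 10) ℂ)})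
      ≃ₐ[ℂ] φ3.range) :=
  hive3_algebra_presentation_general ℂ
end

section
/- Let h_1, ..., h_20 be the twenty generating hives of H(4) (listed in the context), and let φ : C[x_1, ..., x_20] → C[z_{ij} : 1 ≤ j ≤ i ≤ 5] be the C-algebra homomorphism sending x_k to the monomial z^{h_k} = Π_{i,j} z_{ij}^{(h_k)_{ij}}. Then the kernel of φ is the ideal generated by the fifteen binomials: x_1 x_7 x_9 − x_6 x_15, x_1 x_8 x_9 − x_6 x_16, x_1 x_11 x_12 − x_10 x_18, x_6 x_11 x_12 − x_10 x_20, x_2 x_8 x_10 − x_7 x_17, x_2 x_8 x_12 − x_7 x_19, x_6 x_18 − x_1 x_20, x_7 x_16 − x_8 x_15, x_10 x_19 − x_12 x_17, x_15 x_17 − x_2 x_10 x_16, x_15 x_19 − x_2 x_12 x_16, x_15 x_20 − x_7 x_9 x_18, x_16 x_20 − x_8 x_9 x_18, x_17 x_20 − x_6 x_11 x_19, x_17 x_18 − x_1 x_11 x_19. -/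
open MvPolynomial

/-- The twenty generating hives of the hive monoid `H(4)`, written as tuples
`(h₁₁, h₂₁, h₂₂, h₃₁, h₃₂, h₃₃, h₄₁, h₄₂, h₄₃, h₄₄, h₅₁, h₅₂, h₅₃, h₅₄, h₅₅)`
of natural numbers. -/
def hive4Gens : Fin 20 → Fin 15 → ℕ :=
  ![![0,0,1,0,1,1,0,1,1,1,0,1,1,1,1],
    ![0,0,1,0,1,2,0,1,2,2,0,1,2,2,2],
    ![0,0,1,0,1,2,0,1,2,3,0,1,2,3,3],
    ![0,0,1,0,1,2,0,1,2,3,0,1,2,3,4],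
    ![0,1,1,1,1,1,1,1,1,1,1,1,1,1,1],
    ![0,1,1,1,2,2,1,2,2,2,1,2,2,2,2],
    ![0,1,1,1,2,2,1,2,3,3,1,2,3,3,3],
    ![0,1,1,1,2,2,1,2,3,3,1,2,3,4,4],
    ![0,1,1,2,2,2,2,2,2,2,2,2,2,2,2],
    ![0,1,1,2,2,2,2,3,3,3,2,3,3,3,3],
    ![0,1,1,2,2,2,2,3,3,3,2,3,4,4,4],
    ![0,1,1,2,2,2,3,3,3,3,3,3,3,3,3],
    ![0,1,1,2,2,2,3,3,3,3,3,4,4,4,4],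
    ![0,1,1,2,2,2,3,3,3,3,4,4,4,4,4],
    ![0,1,2,2,3,3,2,3,4,4,2,3,4,4,4],
    ![0,1,2,2,3,3,2,3,4,4,2,3,4,5,5],
    ![0,1,2,2,3,4,2,4,5,5,2,4,5,6,6],
    ![0,1,2,2,3,3,3,4,4,4,3,4,5,5,5],
    ![0,1,2,2,3,4,3,4,5,5,3,4,5,6,6],
    ![0,2,2,3,4,4,4,5,5,5,4,5,6,6,6]]

/-- The `ℂ`-algebra homomorphism `φ : ℂ[x₁, ..., x₂₀] → ℂ[z_{ij} : 1 ≤ j ≤ i ≤ 5]`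
sending `x_k` to the monomial `z^{h_k}` (the fifteen entries `z_{ij}` are indexed by
`Fin 15`, row by row). -/
noncomputable def φ4 : MvPolynomial (Fin 20) ℂ →ₐ[ℂ] MvPolynomial (Fin 15) ℂ :=
  aeval (fun k => ∏ j : Fin 15, (X j : MvPolynomial (Fin 15) ℂ) ^ hive4Gens k j)

/-!
Orient every binomial as a rewriting rule `x_i x_j → tail` between monomials with the same image.
A suitable weight drops along each rule, so modulo the fifteen binomials every monomial is congruent
to a standard one, i.e. one divisible by no leading monomial `x_i x_j`. Monomials with distinct
images are linearly independent, so it remains to see that `φ` separates standard monomials.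

If two standard monomials have the same image, the difference `d` of their exponents is an integer
linear relation among the hives with `d_i d_j ≤ 0` for every leading monomial `x_i x_j`. Every
relation satisfies three equations `a + b = x + y` between coordinates of `d`, and twelve of the
leading monomials say precisely that `ax, ay, bx, by ≤ 0`; hence `(x + y)² ≤ 0`, and both sides of
each equation vanish. Then each of the last three conditions `d_i d_j ≤ 0` bounds a square, and
`d = 0`.
-/

section NormalForms

variable {σ R A : Type*} [CommRing R] {I : Ideal (MvPolynomial σ R)} {S : Set (σ →₀ ℕ)}

theorem restrictScalars_sup_restrictSupport_eq_top
    (hI : ∀ e, ∃ s ∈ S, (monomial e 1 - monomial s 1 : MvPolynomial σ R) ∈ I) :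
    I.restrictScalars R ⊔ restrictSupport R S = ⊤ := by
  rw [eq_top_iff, ← (basisMonomials σ R).span_eq, Submodule.span_le]
  rintro _ ⟨e, rfl⟩
  obtain ⟨s, hs, hes⟩ := hI e
  simpa using Submodule.add_mem_sup (S := I.restrictScalars R) hes
    ((monomial_mem_restrictSupport (r := (1 : R))).2 (.inl hs))

theorem disjoint_restrictSupport_ker [AddCommGroup A] [Module R A] {f : MvPolynomial σ R →ₗ[R] A}
    (hf : LinearIndepOn R (fun e => f (monomial e 1)) S) :
    Disjoint (restrictSupport R S) f.ker := by
  rw [restrictSupport_eq_span, Set.image_eq_range]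
  exact Submodule.range_ker_disjoint hf

theorem ker_eq_of_normalForms [Ring A] [Algebra R A] {φ : MvPolynomial σ R →ₐ[R] A}
    (hker : I ≤ RingHom.ker φ)
    (hI : ∀ e, ∃ s ∈ S, (monomial e 1 - monomial s 1 : MvPolynomial σ R) ∈ I)
    (hφ : LinearIndepOn R (fun e => φ (monomial e 1)) S) :
    RingHom.ker φ = I := by
  have hdisj : Disjoint (restrictSupport R S) φ.toLinearMap.ker := disjoint_restrictSupport_ker hφ
  have hle : I.restrictScalars R ≤ φ.toLinearMap.ker := hker
  have heq : I.restrictScalars R = φ.toLinearMap.ker :=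
    eq_of_le_of_inf_le_of_le_sup hle (hdisj.symm.le_bot.trans bot_le)
      (restrictScalars_sup_restrictSupport_eq_top hI ▸ le_top)
  exact Ideal.ext fun p => (SetLike.ext_iff.1 heq p).symm

theorem exists_sub_monomial_mem {α : Type*} [Preorder α] [WellFoundedLT α] (ω : (σ →₀ ℕ) → α)
    (hI : ∀ e ∉ S, ∃ e', ω e' < ω e ∧ (monomial e 1 - monomial e' 1 : MvPolynomial σ R) ∈ I)
    (e : σ →₀ ℕ) :
    ∃ s ∈ S, (monomial e 1 - monomial s 1 : MvPolynomial σ R) ∈ I := by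
  induction e using (InvImage.wf ω wellFounded_lt).induction with
  | _ e ih =>
    by_cases he : e ∈ S
    · exact ⟨e, he, by simp⟩
    · obtain ⟨e', hlt, hmem⟩ := hI e he
      obtain ⟨s, hs, hmem'⟩ := ih e' hlt
      exact ⟨s, hs, by simpa using I.add_mem hmem hmem'⟩

theorem exists_lt_sub_monomial_mem {M : Type*} [AddCommMonoid M] [Preorder M]
    [AddRightStrictMono M] (ω : (σ →₀ ℕ) →+ M) {e p q : σ →₀ ℕ} (hp : p ≤ e)
    (hI : (monomial p 1 - monomial q 1 : MvPolynomial σ R) ∈ I) (hω : ω q < ω p) :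
    ∃ e', ω e' < ω e ∧ (monomial e 1 - monomial e' 1 : MvPolynomial σ R) ∈ I := by
  obtain ⟨r, rfl⟩ := exists_add_of_le hp
  refine ⟨q + r, by simpa using add_lt_add_left hω (ω r), ?_⟩
  simpa [sub_mul, monomial_mul] using I.mul_mem_right (monomial r 1) hI

end NormalForms

theorem linearIndepOn_monomial {ι τ R : Type*} [CommSemiring R] {f : ι → τ →₀ ℕ} {S : Set ι}
    (hf : S.InjOn f) :
    LinearIndepOn R (fun e => (monomial (f e) 1 : MvPolynomial τ R)) S :=
  (basisMonomials τ R).linearIndependent.comp _ hf.injective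

theorem aeval_monomial_monomial {σ τ R : Type*} [CommSemiring R] (a : σ → τ →₀ ℕ) (e : σ →₀ ℕ)
    (c : R) :
    aeval (fun k => (monomial (a k) 1 : MvPolynomial τ R)) (monomial e c) =
      monomial (Finsupp.linearCombination ℕ a e) c := by
  rw [aeval_monomial, algebraMap_eq, Finsupp.linearCombination_apply, monomial_finsupp_sum_index]
  simp only [monomial_pow, one_pow]

theorem ker_aeval_monomial_eq_span {ι σ τ R M : Type*} [CommRing R] [AddCommMonoid M] [Preorder M]
    [AddRightStrictMono M] [WellFoundedLT M] {a : σ → τ →₀ ℕ} {s : Set ι} {lead tail : ι → σ →₀ ℕ}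
    (ω : (σ →₀ ℕ) →+ M) (hω : ∀ i ∈ s, ω (tail i) < ω (lead i))
    (ha : ∀ i ∈ s,
      Finsupp.linearCombination ℕ a (lead i) = Finsupp.linearCombination ℕ a (tail i))
    (hinj : {e | ∀ i ∈ s, ¬ lead i ≤ e}.InjOn (Finsupp.linearCombination ℕ a)) :
    RingHom.ker (aeval fun k => (monomial (a k) 1 : MvPolynomial τ R)) =
      Ideal.span
        ((fun i => (monomial (lead i) 1 - monomial (tail i) 1 : MvPolynomial σ R)) '' s) := by
  apply ker_eq_of_normalForms (S := {e | ∀ i ∈ s, ¬ lead i ≤ e})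
  · rw [Ideal.span_le]
    rintro _ ⟨i, hi, rfl⟩
    simp only [SetLike.mem_coe, RingHom.mem_ker, map_sub, aeval_monomial_monomial, ha i hi,
      sub_self]
  · refine exists_sub_monomial_mem ω fun e he => ?_
    obtain ⟨i, hi, hle⟩ : ∃ i ∈ s, lead i ≤ e := by simpa using he
    exact exists_lt_sub_monomial_mem ω hle (Ideal.subset_span ⟨i, hi, rfl⟩) (hω i hi)
  · simpa only [aeval_monomial_monomial] using linearIndepOn_monomial hinj

theorem monomial_toFinsupp {σ R : Type*} [DecidableEq σ] [CommSemiring R] (s : Multiset σ) :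
    (monomial s.toFinsupp 1 : MvPolynomial σ R) = (s.map X).prod := by
  induction s using Multiset.induction with
  | empty => simp
  | cons a s ih =>
    rw [← Multiset.singleton_add, Multiset.toFinsupp_add, Multiset.toFinsupp_singleton]
    simp [← ih, X, monomial_mul]

theorem linearCombination_toFinsupp {σ M : Type*} [DecidableEq σ] [AddCommMonoid M]
    (v : σ → M) (s : Multiset σ) :
    Finsupp.linearCombination ℕ v s.toFinsupp = (s.map v).sum := by
  induction s using Multiset.induction with
  | empty => simp
  | cons a s ih =>
    rw [← Multiset.singleton_add, Multiset.toFinsupp_add, Multiset.toFinsupp_singleton]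
    simp [ih]

theorem single_add_single_le {σ : Type*} {i j : σ} (hij : i ≠ j) {e : σ →₀ ℕ} (hi : e i ≠ 0)
    (hj : e j ≠ 0) : Finsupp.single i 1 + Finsupp.single j 1 ≤ e := by
  classical
  intro k
  simp only [Finsupp.add_apply, Finsupp.single_apply]
  grind

theorem span_le_span_of_mem_or_neg_mem {R : Type*} [Ring R] {s t : Set R}
    (h : ∀ p ∈ s, p ∈ t ∨ -p ∈ t) : Ideal.span s ≤ Ideal.span t :=
  Ideal.span_le.2 fun p hp => (h p hp).elim (Ideal.subset_span ·)
    fun hp' => neg_mem_iff.1 (Ideal.subset_span hp')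

section Signs

variable {R : Type*} [CommRing R] [LinearOrder R] [IsStrictOrderedRing R] {a b x y : R}

theorem add_eq_zero_of_mul_nonpos (h : a + b = x + y) (hax : a * x ≤ 0) (hay : a * y ≤ 0)
    (hbx : b * x ≤ 0) (hby : b * y ≤ 0) : x + y = 0 := by
  refine (sq_nonpos_iff _).1 ?_
  calc
    (x + y) ^ 2 = a * x + a * y + (b * x + b * y) := by
      linear_combination -(x + y) * h
    _ ≤ 0 := add_nonpos (add_nonpos hax hay) (add_nonpos hbx hby)

theorem sub_mul_sub_nonpos (ha : 0 ≤ a) (hb : 0 ≤ b) (hx : 0 ≤ x) (hy : 0 ≤ y) (hab : a * b = 0)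
    (hxy : x * y = 0) : (a - x) * (b - y) ≤ 0 := by
  calc
    (a - x) * (b - y) = -(a * y + x * b) := by linear_combination hab + hxy
    _ ≤ 0 := neg_nonpos.2 (add_nonneg (mul_nonneg ha hy) (mul_nonneg hx hb))

end Signs

/-- The fifteen binomials, oriented as rewriting rules: `((i, j), t)` rewrites the leading monomial
`X i * X j` to the product of the variables in the multiset `t`. The first twelve leading monomials
are the products `{5, 19} × {14, 15}`, `{6, 14} × {16, 18}` and `{9, 16} × {17, 19}`. -/
def hive4Rules : List ((Fin 20 × Fin 20) × Multiset (Fin 20)) :=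
  [((5, 14), {0, 6, 8}), ((5, 15), {0, 7, 8}), ((14, 19), {6, 8, 17}), ((15, 19), {7, 8, 17}),
   ((6, 16), {1, 7, 9}), ((6, 18), {1, 7, 11}), ((14, 16), {1, 9, 15}), ((14, 18), {1, 11, 15}),
   ((9, 17), {0, 10, 11}), ((9, 19), {5, 10, 11}), ((16, 17), {0, 10, 18}),
   ((16, 19), {5, 10, 18}), ((5, 17), {0, 19}), ((6, 15), {7, 14}), ((11, 16), {9, 18})]

/-- The binomial of a rewriting rule, leading monomial first; it equals one of the fifteen given
binomials up to sign. -/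
noncomputable def hive4Binomial (r : (Fin 20 × Fin 20) × Multiset (Fin 20)) :
    MvPolynomial (Fin 20) ℂ :=
  X r.1.1 * X r.1.2 - (r.2.map X).prod

/-- A weight on the variables that every rule strictly decreases, so that rewriting terminates. It
vanishes on `X 0, ..., X 13`. -/
def hive4Weight : Fin 20 → ℕ :=
  ![0, 0, 0, 0, 0, 0, 0, 0, 0, 0, 0, 0, 0, 0, 2, 3, 3, 2, 2, 1]

/-- The exponent vector `h_k` of the monomial `φ (X k)`, as a finitely supported function. -/
noncomputable def hive4Exponent : Fin 20 → Fin 15 →₀ ℕ :=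
  (Finsupp.linearEquivFunOnFinite ℕ ℕ (Fin 15)).symm ∘ hive4Gens

theorem sum_map_hive4Weight_lt : ∀ r ∈ hive4Rules,
    (r.2.map hive4Weight).sum < hive4Weight r.1.1 + hive4Weight r.1.2 := by
  decide

theorem hive4Rules_fst_ne_snd : ∀ r ∈ hive4Rules, r.1.1 ≠ r.1.2 := by
  decide

theorem hive4Gens_add_hive4Gens :
    ∀ r ∈ hive4Rules, hive4Gens r.1.1 + hive4Gens r.1.2 = (r.2.map hive4Gens).sum := by
  decide

theorem hive4Exponent_add_hive4Exponent {r} (hr : r ∈ hive4Rules) :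
    hive4Exponent r.1.1 + hive4Exponent r.1.2 = (r.2.map hive4Exponent).sum := by
  simpa only [hive4Exponent, map_add, map_multiset_sum, Multiset.map_map, Function.comp_def] using
    congrArg (Finsupp.linearEquivFunOnFinite ℕ ℕ (Fin 15)).symm (hive4Gens_add_hive4Gens r hr)

theorem linearCombination_hive4Exponent_apply (e : Fin 20 →₀ ℕ) (j : Fin 15) :
    Finsupp.linearCombination ℕ hive4Exponent e j = ∑ k, e k * hive4Gens k j := by
  simp [hive4Exponent, Finsupp.linearCombination_apply, Finsupp.sum_fintype]

theorem φ4_eq_aeval_monomial : φ4 = aeval fun k => monomial (hive4Exponent k) 1 := by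
  simp [φ4, hive4Exponent, monomial_eq, Finsupp.prod_fintype]

theorem hive4Binomial_eq_monomial_sub_monomial (r : (Fin 20 × Fin 20) × Multiset (Fin 20)) :
    hive4Binomial r =
      monomial (Finsupp.single r.1.1 1 + Finsupp.single r.1.2 1) 1 -
        monomial r.2.toFinsupp 1 := by
  simp [hive4Binomial, monomial_toFinsupp, X, monomial_mul]

/-- Integer linear relations `∑ d_k h_k = 0` among the twenty hives. -/
def IsHive4Relation (d : Fin 20 → ℤ) : Prop :=
  ∀ j, ∑ k, d k * hive4Gens k j = 0

namespace IsHive4Relation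

variable {d : Fin 20 → ℤ}

theorem rowReduced (hd : IsHive4Relation d) :
    (d 2 = 0 ∧ d 3 = 0 ∧ d 4 = 0 ∧ d 12 = 0 ∧ d 13 = 0) ∧
    (d 0 = -(d 14 + d 15 + d 17) ∧ d 1 = -(d 16 + d 18) ∧ d 7 = -(d 15 + d 16 + d 18) ∧
      d 8 = -(d 14 + d 15) ∧ d 10 = -(d 17 + d 19) ∧ d 11 = -(d 17 + d 18 + d 19)) ∧
    d 5 + d 19 = d 14 + d 15 ∧ d 6 + d 14 = d 16 + d 18 ∧ d 9 + d 16 = d 17 + d 19 := by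
  simp only [IsHive4Relation, hive4Gens, Fin.forall_fin_succ, Fin.sum_univ_succ, Fin.isValue,
    Fin.succ_zero_eq_one, Fin.succ_one_eq_two, Fin.reduceSucc, Fin.default_eq_zero,
    Finset.univ_unique, Finset.sum_singleton, Matrix.cons_val', Matrix.cons_val_fin_one,
    Matrix.cons_val_zero, Matrix.cons_val_succ, Nat.cast_zero, Nat.cast_one, Nat.cast_ofNat,
    mul_zero, mul_one, add_zero, zero_add, IsEmpty.forall_iff, true_and] at hd
  refine ⟨⟨?_, ?_, ?_, ?_, ?_⟩, ⟨?_, ?_, ?_, ?_, ?_, ?_⟩, ?_, ?_, ?_⟩ <;> grind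

theorem eq_zero_of_mul_nonpos (hd : IsHive4Relation d)
    (hs : ∀ r ∈ hive4Rules, d r.1.1 * d r.1.2 ≤ 0) : d = 0 := by
  obtain ⟨h_zero, h_dep, h₁, h₂, h₃⟩ := hd.rowReduced
  simp only [hive4Rules, List.forall_mem_cons] at hs
  obtain ⟨h5_14, h5_15, h14_19, h15_19, h6_16, h6_18, h14_16, h14_18, h9_17, h9_19, h16_17,
    h16_19, h5_17, h6_15, h11_16, -⟩ := hs
  rw [mul_comm] at h14_19 h15_19
  have h14_15 : d 14 + d 15 = 0 := add_eq_zero_of_mul_nonpos h₁ h5_14 h5_15 h14_19 h15_19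
  have h16_18 : d 16 + d 18 = 0 := add_eq_zero_of_mul_nonpos h₂ h6_16 h6_18 h14_16 h14_18
  have h17_19 : d 17 + d 19 = 0 := add_eq_zero_of_mul_nonpos h₃ h9_17 h9_19 h16_17 h16_19
  have h14 : d 14 = 0 := by
    rw [show d 6 = -d 14 by lia, show d 15 = -d 14 by lia, neg_mul_neg, ← sq] at h6_15
    exact (sq_nonpos_iff _).1 h6_15
  have h16 : d 16 = 0 := by
    rw [show d 11 = d 16 by lia, ← sq] at h11_16
    exact (sq_nonpos_iff _).1 h11_16
  have h17 : d 17 = 0 := by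
    rw [show d 5 = d 17 by lia, ← sq] at h5_17
    exact (sq_nonpos_iff _).1 h5_17
  ext k
  fin_cases k <;> simp only [Pi.zero_apply] <;> lia

end IsHive4Relation

theorem isHive4Relation_sub {e e' : Fin 20 →₀ ℕ}
    (h : Finsupp.linearCombination ℕ hive4Exponent e =
      Finsupp.linearCombination ℕ hive4Exponent e') :
    IsHive4Relation fun k => (e k : ℤ) - e' k := by
  intro j
  have hj := DFunLike.congr_fun h j
  simp only [linearCombination_hive4Exponent_apply] at hj
  simp only [sub_mul, Finset.sum_sub_distrib, sub_eq_zero]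
  exact_mod_cast hj

theorem injOn_linearCombination_hive4Exponent :
    {e : Fin 20 →₀ ℕ | ∀ r ∈ hive4Rules, e r.1.1 * e r.1.2 = 0}.InjOn
      (Finsupp.linearCombination ℕ hive4Exponent) := by
  intro e he e' he' h
  have hd := (isHive4Relation_sub h).eq_zero_of_mul_nonpos fun r hr =>
    sub_mul_sub_nonpos (Int.natCast_nonneg _) (Int.natCast_nonneg _) (Int.natCast_nonneg _)
      (Int.natCast_nonneg _) (mod_cast he r hr) (mod_cast he' r hr)
  ext k
  exact_mod_cast sub_eq_zero.1 (congrFun hd k)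

theorem ker_φ4_eq_span_hive4Binomial :
    RingHom.ker φ4 = Ideal.span (hive4Binomial '' {r | r ∈ hive4Rules}) := by
  rw [φ4_eq_aeval_monomial, funext hive4Binomial_eq_monomial_sub_monomial]
  refine ker_aeval_monomial_eq_span (Finsupp.weight hive4Weight) (fun r hr => ?_) (fun r hr => ?_)
    (injOn_linearCombination_hive4Exponent.mono ?_)
  · simpa [Finsupp.weight, linearCombination_toFinsupp] using sum_map_hive4Weight_lt r hr
  · simpa [linearCombination_toFinsupp] using hive4Exponent_add_hive4Exponent hr
  · intro e he r hr
    by_contra h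
    exact he r hr (single_add_single_le (hive4Rules_fst_ne_snd r hr) (left_ne_zero_of_mul h)
      (right_ne_zero_of_mul h))

/-- The kernel of `φ` is the ideal generated by the fifteen binomials
`r₁, ..., r₁₅` (here `x_k` is `X (k-1)`). -/
theorem hive4_algebra_presentation :
    RingHom.ker φ4 =
      Ideal.span {(X 0 * X 6 * X 8 - X 5 * X 14 : MvPolynomial (Fin 20) ℂ),
        X 0 * X 7 * X 8 - X 5 * X 15,
        X 0 * X 10 * X 11 - X 9 * X 17,
        X 5 * X 10 * X 11 - X 9 * X 19,
        X 1 * X 7 * X 9 - X 6 * X 16,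
        X 1 * X 7 * X 11 - X 6 * X 18,
        X 5 * X 17 - X 0 * X 19,
        X 6 * X 15 - X 7 * X 14,
        X 9 * X 18 - X 11 * X 16,
        X 14 * X 16 - X 1 * X 9 * X 15,
        X 14 * X 18 - X 1 * X 11 * X 15,
        X 14 * X 19 - X 6 * X 8 * X 17,
        X 15 * X 19 - X 7 * X 8 * X 17,
        X 16 * X 19 - X 5 * X 10 * X 18,
        X 16 * X 17 - X 0 * X 10 * X 18} := by
  rw [ker_φ4_eq_span_hive4Binomial]
  apply le_antisymm <;> apply span_le_span_of_mem_or_neg_mem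
  · rintro _ ⟨r, hr : r ∈ hive4Rules, rfl⟩
    fin_cases hr <;>
      simp only [hive4Binomial, Multiset.insert_eq_cons, Multiset.map_cons, Multiset.map_singleton,
        Multiset.prod_cons, Multiset.prod_singleton, mul_assoc, neg_sub, Set.mem_insert_iff,
        Set.mem_singleton_iff, true_or, or_true]
  · simp [hive4Rules, hive4Binomial, mul_assoc]
end

section
/- The GL(3) tensor product algebra TA(3) = C[M_3 ⊕ M_3]^{U_3 × U_3 × U_3} is generated as a C-algebra by the ten polynomials: g_1 = y_{11}; g_2 = det of the 3×3 matrix (y_{ab})_{1≤a,b≤3}; g_3 = det [[y_{11}, y_{12}], [y_{21}, y_{22}]]; g_4 = x_{11}; g_5 = det [[x_{11}, y_{11}], [x_{21}, y_{21}]]; g_6 = det of the 3×3 matrix with columns (x_{a1}), (y_{a1}), (y_{a2}) for a = 1,2,3; g_7 = det [[x_{11}, x_{12}], [x_{21}, x_{22}]]; g_8 = det of the 3×3 matrix with columns (x_{a1}), (x_{a2}), (y_{a1}); g_9 = det of the 3×3 matrix (x_{ab})_{1≤a,b≤3}; g_10 = D_2 · y_{11} − g_8 · y_{12}, where D_2 is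 the det of the 3×3 matrix with columns (x_{a1}), (x_{a2}), (y_{a2}). -/
open MvPolynomial

/-- The polynomial ring `ℂ[M_n ⊕ M_n]` in the variables `x_{ab}` (indexed by
`Sum.inl (a, b)`) and `y_{ab}` (indexed by `Sum.inr (a, b)`), `1 ≤ a, b ≤ n`. -/
abbrev MV (n : ℕ) := MvPolynomial ((Fin n × Fin n) ⊕ (Fin n × Fin n)) ℂ

/-- `g` is upper triangular with all diagonal entries equal to `1`. -/
def IsUniUpper {n : ℕ} (g : Matrix (Fin n) (Fin n) ℂ) : Prop :=
  (∀ i, g i i = 1) ∧ ∀ i j : Fin n, j < i → g i j = 0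

/-- The action of `(g₁, g₂, g₃) ∈ GL(n)³` on `ℂ[M_n ⊕ M_n]`, given by
`(g·f)(m₁, m₂) = f(g₁ᵀ m₁ g₂, g₁ᵀ m₂ g₃)`: it substitutes for `x_{ab}` the
`(a,b)` entry of `g₁ᵀ X g₂` and for `y_{ab}` the `(a,b)` entry of `g₁ᵀ Y g₃`. -/
noncomputable def act (n : ℕ) (g1 g2 g3 : Matrix (Fin n) (Fin n) ℂ) : MV n →ₐ[ℂ] MV n :=
  aeval (Sum.elim
    (fun p : Fin n × Fin n => ∑ c : Fin n, ∑ d : Fin n,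
      C (g1 c p.1) * C (g2 d p.2) * X (Sum.inl (c, d)))
    (fun p : Fin n × Fin n => ∑ c : Fin n, ∑ d : Fin n,
      C (g1 c p.1) * C (g3 d p.2) * X (Sum.inr (c, d))))

/-- The tensor product algebra `TA(n)`: the subalgebra of `ℂ[M_n ⊕ M_n]` of
polynomials invariant under `U_n × U_n × U_n`. -/
noncomputable def TA (n : ℕ) : Subalgebra ℂ (MV n) where
  carrier := {f | ∀ g1 g2 g3 : Matrix (Fin n) (Fin n) ℂ,
      IsUniUpper g1 → IsUniUpper g2 → IsUniUpper g3 → act n g1 g2 g3 f = f}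
  mul_mem' := by
    intro a b ha hb g1 g2 g3 u1 u2 u3
    rw [map_mul, ha g1 g2 g3 u1 u2 u3, hb g1 g2 g3 u1 u2 u3]
  one_mem' := by
    intro g1 g2 g3 u1 u2 u3
    rw [map_one]
  add_mem' := by
    intro a b ha hb g1 g2 g3 u1 u2 u3
    rw [map_add, ha g1 g2 g3 u1 u2 u3, hb g1 g2 g3 u1 u2 u3]
  zero_mem' := by
    intro g1 g2 g3 u1 u2 u3
    rw [map_zero]
  algebraMap_mem' := by
    intro r g1 g2 g3 u1 u2 u3
    exact (act n g1 g2 g3).commutes r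

/-- The coordinate `x_{ab}` on the first matrix summand (`a b` zero-based). -/
noncomputable def xv (a b : Fin 3) : MV 3 := X (Sum.inl (a, b))

/-- The coordinate `y_{ab}` on the second matrix summand (`a b` zero-based). -/
noncomputable def yv (a b : Fin 3) : MV 3 := X (Sum.inr (a, b))

/-- `g₁ = y₁₁`. -/
noncomputable def g1 : MV 3 := yv 0 0

/-- `g₂ = det (y_{ab})`. -/
noncomputable def g2 : MV 3 := (Matrix.of fun a b : Fin 3 => yv a b).det

/-- `g₃ = det [[y₁₁, y₁₂], [y₂₁, y₂₂]]`. -/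
noncomputable def g3 : MV 3 := yv 0 0 * yv 1 1 - yv 0 1 * yv 1 0

/-- `g₄ = x₁₁`. -/
noncomputable def g4 : MV 3 := xv 0 0

/-- `g₅ = det [[x₁₁, y₁₁], [x₂₁, y₂₁]]`. -/
noncomputable def g5 : MV 3 := xv 0 0 * yv 1 0 - yv 0 0 * xv 1 0

/-- `g₆ = det` of the `3×3` matrix with columns `x_{•1}`, `y_{•1}`, `y_{•2}`. -/
noncomputable def g6 : MV 3 :=
  (!![xv 0 0, yv 0 0, yv 0 1;
      xv 1 0, yv 1 0, yv 1 1;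
      xv 2 0, yv 2 0, yv 2 1]).det

/-- `g₇ = det [[x₁₁, x₁₂], [x₂₁, x₂₂]]`. -/
noncomputable def g7 : MV 3 := xv 0 0 * xv 1 1 - xv 0 1 * xv 1 0

/-- `g₈ = det` of the `3×3` matrix with columns `x_{•1}`, `x_{•2}`, `y_{•1}`. -/
noncomputable def g8 : MV 3 :=
  (!![xv 0 0, xv 0 1, yv 0 0;
      xv 1 0, xv 1 1, yv 1 0;
      xv 2 0, xv 2 1, yv 2 0]).det

/-- `g₉ = det (x_{ab})`. -/
noncomputable def g9 : MV 3 := (Matrix.of fun a b : Fin 3 => xv a b).det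

/-- `D₂ = det` of the `3×3` matrix with columns `x_{•1}`, `x_{•2}`, `y_{•2}`. -/
noncomputable def D2 : MV 3 :=
  (!![xv 0 0, xv 0 1, yv 0 1;
      xv 1 0, xv 1 1, yv 1 1;
      xv 2 0, xv 2 1, yv 2 1]).det

/-- `g₁₀ = D₂ ⬝ y₁₁ - g₈ ⬝ y₁₂`. -/
noncomputable def g10 : MV 3 := D2 * yv 0 0 - g8 * yv 0 1

/-!
If no leading minor `g₁, g₃, g₄, g₇` vanishes at `(X, Y)`, an LDU decomposition of `X` and column
operations on `Y` move the point by `U₃³` to one whose entries are quotients of the `gⱼ` by these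
minors. Hence an invariant times a power of `g₁ g₃ g₄ g₇` is a polynomial in the `gⱼ`. The four
factors are cancelled one at a time: the quotient map `(g₁, ..., g₁₀)` takes its values in
`t₅ t₁₀ = t₁ t₆ t₇ + t₃ t₄ t₈`, and over `tᵢ = 0` (`i = 1, 3, 4, 7`) it hits every point of this
hypersurface with the other coordinates, except possibly `t₁₀`, nonzero. The section by `tᵢ = 0`
keeps one of the two monomials on the right, so it is the closure of the graph of
`t₁₀ = m / t₅`, and a polynomial in the `gⱼ` divisible by `gᵢ` comes from a multiple of `tᵢ`
modulo the relation.
-/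

section Polynomials

variable {σ ι R K : Type*}

lemma eval_aeval_eq [CommRing R] (v : σ → R) (x : ι → MvPolynomial σ R) (f : MvPolynomial ι R) :
    eval v (aeval x f) = eval (fun i ↦ eval v (x i)) f := by
  simpa only [aeval_eq_eval] using comp_aeval_apply x (aeval v) f

lemma eq_of_eval_eq_of_eval_ne_zero [CommRing R] [IsDomain R] [Infinite R]
    {h f g : MvPolynomial σ R} (hh : h ≠ 0)
    (hfg : ∀ v, eval v h ≠ 0 → eval v f = eval v g) : f = g := by
  refine mul_left_cancel₀ hh (MvPolynomial.funext fun v ↦ ?_)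
  rw [map_mul, map_mul]
  by_cases hv : eval v h = 0
  · rw [hv, zero_mul, zero_mul]
  · rw [hfg v hv]

lemma X_dvd_sub_aeval_update [DecidableEq σ] [CommRing R] (i : σ) (f : MvPolynomial σ R) :
    X i ∣ f - aeval (Function.update X i 0) f := by
  let π := Ideal.Quotient.mkₐ R (Ideal.span {(X i : MvPolynomial σ R)})
  have hπ : π = π.comp (aeval (Function.update X i 0)) := by
    ext j
    obtain rfl | hj := eq_or_ne j i
    · simp [π]
    · simp [Function.update_of_ne hj]
  rw [← Ideal.mem_span_singleton, ← Ideal.Quotient.eq]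
  exact DFunLike.congr_fun hπ f

lemma eval_aeval_update [DecidableEq σ] [CommRing R] (i : σ) (f : MvPolynomial σ R) (v : σ → R) :
    eval v (aeval (Function.update X i 0) f) = eval (Function.update v i 0) f := by
  rw [eval_aeval_eq]
  congr 2 with j
  obtain rfl | hj := eq_or_ne j i
  · simp
  · simp [Function.update_of_ne hj]

lemma eval_eq_of_mem_supported [CommRing R] {s : Set σ} {f : MvPolynomial σ R}
    (hf : f ∈ supported R s) {v w : σ → R} (hvw : Set.EqOn v w s) : eval v f = eval w f :=
  eval₂Hom_congr' rfl (fun _ hi _ ↦ hvw (mem_supported.1 hf hi)) rfl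

open scoped Pointwise in
lemma exists_pow_mul_aeval_mem {A : Type*} [CommRing R] [CommRing A] [Algebra R A]
    {S : Subalgebra R A} {d : A} (hd : d ∈ S) {x : ι → A} (hx : ∀ i, d * x i ∈ S)
    (f : MvPolynomial ι R) : ∃ n : ℕ, d ^ n * aeval x f ∈ S := by
  have hgen : d • Set.range x ⊆ S := by
    rintro _ ⟨_, ⟨i, rfl⟩, rfl⟩
    exact hx i
  have hf : aeval x f ∈ Algebra.adjoin R (Set.range x) := by
    rw [Algebra.adjoin_range_eq_range_aeval]
    exact ⟨f, rfl⟩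
  obtain ⟨n, hn⟩ := Algebra.pow_smul_mem_of_smul_subset_of_mem_adjoin d _ S hgen hf hd
  exact ⟨n, hn n le_rfl⟩

lemma exists_mem_supported_dvd_pow_mul_sub [CommRing R] [Nontrivial R] {y z : σ} (hyz : y ≠ z)
    {m : MvPolynomial σ R} (hm : m ∈ supported R {z}ᶜ) (f : MvPolynomial σ R) :
    ∃ n : ℕ, ∃ r ∈ supported R {z}ᶜ, X y * X z - m ∣ X y ^ n * f - r := by
  let π := Ideal.Quotient.mkₐ R (Ideal.span {X y * X z - m})
  have hX : ∀ j ≠ z, X j ∈ supported R {z}ᶜ := fun j hj ↦ X_mem_supported.2 hj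
  have hπ : π (X y * X z) = π m :=
    Ideal.Quotient.eq.2 (Ideal.mem_span_singleton_self _)
  have hgen : ∀ j, π (X y) * π (X j) ∈ (supported R {z}ᶜ).map π := by
    intro j
    rw [← map_mul]
    obtain rfl | hj := eq_or_ne j z
    · exact ⟨m, hm, hπ.symm⟩
    · exact ⟨X y * X j, mul_mem (hX y hyz) (hX j hj), rfl⟩
  obtain ⟨n, r, hr, hrf⟩ :=
    exists_pow_mul_aeval_mem (Subalgebra.mem_map.2 ⟨X y, hX y hyz, rfl⟩) hgen f
  have hπr : π r = π (X y ^ n * f) := by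
    have hπf : aeval (fun j ↦ π (X j)) f = π f := (DFunLike.congr_fun (aeval_unique π) f).symm
    rw [map_mul, map_pow, ← hπf]
    exact hrf
  exact ⟨n, r, hr, Ideal.mem_span_singleton.1 (Ideal.Quotient.eq.1 hπr.symm)⟩

lemma dvd_of_dvd_prime_pow_mul {M : Type*} [CommMonoidWithZero M] [IsCancelMulZero M]
    {p q f : M} (hp : Prime p) (hpq : ¬p ∣ q) {n : ℕ} (h : q ∣ p ^ n * f) : q ∣ f := by
  obtain ⟨c, hc⟩ := h
  obtain ⟨d, rfl⟩ := hp.pow_dvd_of_dvd_mul_left n hpq ⟨f, hc.symm⟩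
  refine ⟨d, mul_left_cancel₀ (pow_ne_zero n hp.ne_zero) ?_⟩
  rw [hc, mul_left_comm]

/- The hypersurface `X y * X z = m` is the graph of `m / X y` over the locus `X y ≠ 0`, and
`X y` is a nonzerodivisor modulo its equation. -/
lemma dvd_of_eval_eq_zero_of_forall_ne_zero [Field K] [Infinite K] {y z : σ} (hyz : y ≠ z)
    {m : MvPolynomial σ K} (hm : m ∈ supported K {z}ᶜ) (hym : ¬X y ∣ m) {f : MvPolynomial σ K}
    (hf : ∀ v : σ → K, (∀ j ≠ z, v j ≠ 0) → v y * v z = eval v m → eval v f = 0) :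
    X y * X z - m ∣ f := by
  classical
  obtain ⟨n, r, hr, hdvd⟩ := exists_mem_supported_dvd_pow_mul_sub hyz hm f
  have hr0 : r = 0 := by
    refine funext_set (fun _ ↦ {0}ᶜ) (fun _ ↦ (Set.finite_singleton 0).infinite_compl)
      fun v hv ↦ ?_
    have hv0 : ∀ j, v j ≠ 0 := fun j ↦ hv j trivial
    let w := Function.update v z (eval v m / v y)
    have hw : ∀ j ≠ z, w j = v j := fun j hj ↦ Function.update_of_ne hj _ _
    have hwv : Set.EqOn w v {z}ᶜ := hw
    have hwm : w y * w z = eval w m := by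
      have hwz : w z = eval v m / v y := Function.update_self ..
      rw [hw y hyz, eval_eq_of_mem_supported hm hwv, hwz, mul_div_cancel₀ _ (hv0 y)]
    have hwf : eval w f = 0 := hf w (fun j hj ↦ by rw [hw j hj]; exact hv0 j) hwm
    obtain ⟨c, hc⟩ := hdvd
    have hwr := congrArg (eval w) hc
    simp only [map_sub, map_mul, eval_X, hwf, hwm, mul_zero, zero_sub, sub_self, zero_mul,
      neg_eq_zero] at hwr
    rw [← eval_eq_of_mem_supported hr hwv, hwr, map_zero]
  rw [hr0, sub_zero] at hdvd
  exact dvd_of_dvd_prime_pow_mul X_prime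
    (fun h ↦ hym ((dvd_sub_right (dvd_mul_right _ _)).1 h)) hdvd

lemma mem_span_X_sup_span_of_eval_eq_zero [Field K] [Infinite K] {i y z : σ} (hiy : i ≠ y)
    (hiz : i ≠ z) (hyz : y ≠ z) {q m f : MvPolynomial σ K} (hm : m ∈ supported K {i, z}ᶜ)
    (hym : ¬X y ∣ m) (hq : X i ∣ q - (X y * X z - m))
    (hf : ∀ v : σ → K, v i = 0 → (∀ j ≠ i, j ≠ z → v j ≠ 0) → eval v q = 0 → eval v f = 0) :
    f ∈ Ideal.span {X i} ⊔ Ideal.span {q} := by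
  classical
  have hmz : m ∈ supported K {z}ᶜ := supported_mono (by simp) hm
  obtain ⟨c, hc⟩ : X y * X z - m ∣ aeval (Function.update X i 0) f := by
    refine dvd_of_eval_eq_zero_of_forall_ne_zero hyz hmz hym fun v hv hvm ↦ ?_
    let w := Function.update v i 0
    have hwi : w i = 0 := Function.update_self ..
    have hw : ∀ j ≠ i, w j = v j := fun j hj ↦ Function.update_of_ne hj ..
    have hwm : eval w m = eval v m :=
      eval_eq_of_mem_supported hm fun j hj ↦ hw j fun h ↦ hj (.inl h)
    have hwq : eval w q = 0 := by
      obtain ⟨c, hc⟩ := hq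
      simpa [hwi, hw y hiy.symm, hw z hiz.symm, hwm, hvm] using congrArg (eval w) hc
    rw [eval_aeval_update]
    exact hf w hwi (fun j hji hjz ↦ (hw j hji).symm ▸ hv j hjz) hwq
  obtain ⟨d, hd⟩ := X_dvd_sub_aeval_update i f
  obtain ⟨e, he⟩ := hq
  refine Ideal.mem_span_singleton_sup.2
    ⟨d - e * c, q * c, Ideal.mem_span_singleton.2 (dvd_mul_right ..), ?_⟩
  linear_combination -hd - hc + c * he

lemma exists_pow_mul_eval_eq [Field K] (h : MvPolynomial σ K) (x : (σ → K) → ι → K)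
    (hx : ∀ i, ∃ p : MvPolynomial σ K, ∀ v, eval v h ≠ 0 → eval v h * x v i = eval v p)
    (f : MvPolynomial ι K) :
    ∃ (n : ℕ) (p : MvPolynomial σ K),
      ∀ v, eval v h ≠ 0 → eval v h ^ n * eval (x v) f = eval v p := by
  let U := {v : σ → K // eval v h ≠ 0}
  let ρ : MvPolynomial σ K →ₐ[K] U → K := AlgHom.pi fun v ↦ aeval v.1
  let xU : ι → U → K := fun i v ↦ x v.1 i
  have hgen : ∀ i, ρ h * xU i ∈ ρ.range := by
    intro i
    obtain ⟨p, hp⟩ := hx i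
    exact ⟨p, _root_.funext fun v ↦ (hp v.1 v.2).symm⟩
  obtain ⟨n, p, hp⟩ := exists_pow_mul_aeval_mem (ρ.mem_range_self h) hgen f
  refine ⟨n, p, fun v hv ↦ ?_⟩
  have hxv : aeval xU f ⟨v, hv⟩ = eval (x v) f :=
    comp_aeval_apply xU (Pi.evalAlgHom K (fun _ : U ↦ K) ⟨v, hv⟩) f
  rw [← hxv]
  exact (congrFun hp ⟨v, hv⟩).symm

end Polynomials

section Saturation

variable {R A B : Type*} [CommRing R] [CommRing A] [CommRing B] [Algebra R A] [Algebra R B]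

/-- The elements `s` of `A` by which the subalgebra `S` is saturated: `s * f ∈ S` forces
`f ∈ S`. They form a submonoid, so it is enough to saturate one factor at a time. -/
def saturators (S : Subalgebra R A) : Submonoid A where
  carrier := {s | ∀ f, s * f ∈ S → f ∈ S}
  one_mem' f hf := by rwa [one_mul] at hf
  mul_mem' {s t} hs ht f hf := ht f (hs _ (by rwa [← mul_assoc]))

lemma mem_saturators {S : Subalgebra R A} {s : A} :
    s ∈ saturators S ↔ ∀ f, s * f ∈ S → f ∈ S :=
  Iff.rfl

lemma map_mem_saturators_range [IsDomain A] (φ : B →ₐ[R] A) {p : B} (hp : φ p ≠ 0)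
    (h : ∀ q, φ p ∣ φ q → q ∈ Ideal.span {p} ⊔ RingHom.ker φ) :
    φ p ∈ saturators φ.range := by
  rintro f ⟨q, hq⟩
  obtain ⟨a, b, hb, rfl⟩ := Ideal.mem_span_singleton_sup.1 (h q ⟨f, hq⟩)
  refine ⟨a, mul_left_cancel₀ hp ?_⟩
  rw [← hq]
  simp [RingHom.mem_ker.1 hb, mul_comm]

end Saturation

namespace TA

/-- The point `(A, B)` of `M_n ⊕ M_n`, as an assignment of values to the variables of `MV n`. -/
def point {n : ℕ} (A B : Matrix (Fin n) (Fin n) ℂ) : (Fin n × Fin n) ⊕ (Fin n × Fin n) → ℂ :=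
  Sum.elim (fun p ↦ A p.1 p.2) (fun p ↦ B p.1 p.2)

lemma point_surjective {n : ℕ} (p : (Fin n × Fin n) ⊕ (Fin n × Fin n) → ℂ) :
    ∃ A B, point A B = p :=
  ⟨fun i j ↦ p (.inl (i, j)), fun i j ↦ p (.inr (i, j)), Sum.elim_comp_inl_inr p⟩

lemma eval_point_act {n : ℕ} (a b c A B : Matrix (Fin n) (Fin n) ℂ) (f : MV n) :
    eval (point A B) (act n a b c f) =
      eval (point (a.transpose * A * b) (a.transpose * B * c)) f := by
  rw [act, eval_aeval_eq]
  congr 2 with s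
  have hentry : ∀ (M N : Matrix (Fin n) (Fin n) ℂ) (i j : Fin n),
      ∑ k, ∑ l, a k i * N l j * M k l = (a.transpose * M * N) i j := by
    intro M N i j
    simp only [Matrix.mul_apply, Matrix.transpose_apply, Finset.sum_mul]
    rw [Finset.sum_comm]
    simp only [mul_right_comm]
  rcases s with ⟨i, j⟩ | ⟨i, j⟩
  · simpa [point] using hentry A b i j
  · simpa [point] using hentry B c i j

lemma isUniUpper_fin_three (p q r : ℂ) : IsUniUpper !![1, p, q; 0, 1, r; 0, 0, 1] := by
  constructor
  · intro i
    fin_cases i <;> rfl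
  · intro i j hij
    fin_cases i <;> fin_cases j <;> first | rfl | exact absurd hij (by decide)

/-- The family `g₁, ..., g₁₀`; its indices are zero-based, so `generator j` is `g_{j+1}`. -/
noncomputable def generator : Fin 10 → MV 3 := ![g1, g2, g3, g4, g5, g6, g7, g8, g9, g10]

/-- The values of `g₁, ..., g₁₀` at `(A, B)`: the quotient map `M_3 ⊕ M_3 → ℂ¹⁰`. -/
noncomputable def values (A B : Matrix (Fin 3) (Fin 3) ℂ) : Fin 10 → ℂ :=
  fun j ↦ eval (point A B) (generator j)

lemma values_eq (A B : Matrix (Fin 3) (Fin 3) ℂ) :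
    values A B =
      ![B 0 0,
        B.det,
        B 0 0 * B 1 1 - B 0 1 * B 1 0,
        A 0 0,
        A 0 0 * B 1 0 - B 0 0 * A 1 0,
        !![A 0 0, B 0 0, B 0 1; A 1 0, B 1 0, B 1 1; A 2 0, B 2 0, B 2 1].det,
        A 0 0 * A 1 1 - A 0 1 * A 1 0,
        !![A 0 0, A 0 1, B 0 0; A 1 0, A 1 1, B 1 0; A 2 0, A 2 1, B 2 0].det,
        A.det,
        !![A 0 0, A 0 1, B 0 1; A 1 0, A 1 1, B 1 1; A 2 0, A 2 1, B 2 1].det * B 0 0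
          - !![A 0 0, A 0 1, B 0 0; A 1 0, A 1 1, B 1 0; A 2 0, A 2 1, B 2 0].det * B 0 1] := by
  funext j
  fin_cases j <;>
    simp [values, generator, g1, g2, g3, g4, g5, g6, g7, g8, g9, g10, D2, xv, yv, point,
      Matrix.det_fin_three]

lemma eval_point_aeval_generator (A B : Matrix (Fin 3) (Fin 3) ℂ) (F : MvPolynomial (Fin 10) ℂ) :
    eval (point A B) (aeval generator F) = eval (values A B) F :=
  eval_aeval_eq _ _ F

lemma values_act {a b c : Matrix (Fin 3) (Fin 3) ℂ} (ha : IsUniUpper a) (hb : IsUniUpper b)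
    (hc : IsUniUpper c) (A B : Matrix (Fin 3) (Fin 3) ℂ) :
    values (a.transpose * A * b) (a.transpose * B * c) = values A B := by
  have entries : ∀ {g : Matrix (Fin 3) (Fin 3) ℂ}, IsUniUpper g →
      g = !![1, g 0 1, g 0 2; 0, 1, g 1 2; 0, 0, 1] := by
    intro g hg
    ext i j
    fin_cases i <;> fin_cases j <;> simp [hg.1, hg.2]
  rw [values_eq, values_eq, entries ha, entries hb, entries hc]
  funext j
  fin_cases j <;>
    simp [Matrix.det_fin_three, Matrix.mul_apply, Fin.sum_univ_three] <;> ring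

lemma generator_mem (j : Fin 10) : generator j ∈ TA 3 := by
  intro a b c ha hb hc
  refine MvPolynomial.funext fun p ↦ ?_
  obtain ⟨A, B, rfl⟩ := point_surjective p
  rw [eval_point_act]
  exact congrFun (values_act ha hb hc A B) j

/-- The indices of `g₁`, `g₃`, `g₄`, `g₇`, the proper leading principal minors of `Y` and `X`. -/
def leadingMinors : Finset (Fin 10) := {0, 2, 3, 6}

lemma generator_ne_zero {i : Fin 10} (hi : i ∈ leadingMinors) : generator i ≠ 0 := by
  intro h
  have h0 : values 1 1 i = 0 := by rw [values, h, map_zero]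
  rw [values_eq] at h0
  fin_cases hi <;> simp at h0

/-- The `X`-component of the representative of the `U₃³`-orbit on which `g₁, ..., g₁₀` take the
values `v`; the entries are meaningful if `v i ≠ 0` for all `i ∈ leadingMinors`. -/
noncomputable def sliceX (v : Fin 10 → ℂ) : Matrix (Fin 3) (Fin 3) ℂ :=
  !![v 3, 0, 0; 0, v 6 / v 3, 0; 0, 0, v 8 / v 6]

/-- The `Y`-component of the representative of the `U₃³`-orbit on which `g₁, ..., g₁₀` take the
values `v`; the entries are meaningful if `v i ≠ 0` for all `i ∈ leadingMinors`. -/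
noncomputable def sliceY (v : Fin 10 → ℂ) : Matrix (Fin 3) (Fin 3) ℂ :=
  !![v 0, 0, 0; v 4 / v 3, v 2 / v 0, 0; v 7 / v 6, v 9 / (v 6 * v 0), v 1 / v 2]

lemma exists_slice_eq {A B : Matrix (Fin 3) (Fin 3) ℂ}
    (h : ∀ i ∈ leadingMinors, values A B i ≠ 0) :
    ∃ a b c, IsUniUpper a ∧ IsUniUpper b ∧ IsUniUpper c ∧
      a.transpose * sliceX (values A B) * b = A ∧ a.transpose * sliceY (values A B) * c = B := by
  have hB₁ : B 0 0 ≠ 0 := by simpa [values_eq] using h 0 (by decide)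
  have hB₂ : B 0 0 * B 1 1 - B 0 1 * B 1 0 ≠ 0 := by simpa [values_eq] using h 2 (by decide)
  -- `field_simp` also meets the minors with the commuted second product.
  have hB₂' : B 0 0 * B 1 1 - B 1 0 * B 0 1 ≠ 0 := by rwa [mul_comm (B 1 0)]
  have hA₁ : A 0 0 ≠ 0 := by simpa [values_eq] using h 3 (by decide)
  have hA₂ : A 0 0 * A 1 1 - A 0 1 * A 1 0 ≠ 0 := by simpa [values_eq] using h 6 (by decide)
  have hA₂' : A 0 0 * A 1 1 - A 1 0 * A 0 1 ≠ 0 := by rwa [mul_comm (A 1 0)]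
  refine ⟨!![1, A 1 0 / A 0 0, A 2 0 / A 0 0;
      0, 1, (A 0 0 * A 2 1 - A 2 0 * A 0 1) / (A 0 0 * A 1 1 - A 0 1 * A 1 0); 0, 0, 1],
    !![1, A 0 1 / A 0 0, A 0 2 / A 0 0;
      0, 1, (A 0 0 * A 1 2 - A 1 0 * A 0 2) / (A 0 0 * A 1 1 - A 0 1 * A 1 0); 0, 0, 1],
    !![1, B 0 1 / B 0 0, B 0 2 / B 0 0;
      0, 1, (B 0 0 * B 1 2 - B 1 0 * B 0 2) / (B 0 0 * B 1 1 - B 0 1 * B 1 0); 0, 0, 1],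
    isUniUpper_fin_three .., isUniUpper_fin_three .., isUniUpper_fin_three .., ?_, ?_⟩ <;>
  · ext i j
    fin_cases i <;> fin_cases j <;>
    simp [Matrix.mul_apply, Fin.sum_univ_three, sliceX, sliceY, values_eq,
      Matrix.det_fin_three] <;>
    field_simp <;> ring

lemma eval_slice_eq {f : MV 3} (hf : f ∈ TA 3) {A B : Matrix (Fin 3) (Fin 3) ℂ}
    (h : ∀ i ∈ leadingMinors, values A B i ≠ 0) :
    eval (point (sliceX (values A B)) (sliceY (values A B))) f = eval (point A B) f := by
  obtain ⟨a, b, c, ha, hb, hc, hA, hB⟩ := exists_slice_eq h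
  rw [← congrArg (eval _) (hf a b c ha hb hc), eval_point_act, hA, hB]

/-- The product `g₁ g₃ g₄ g₇` as a polynomial in the generators: the common denominator of the
entries of the slice. -/
noncomputable def sliceDenom : MvPolynomial (Fin 10) ℂ := ∏ i ∈ leadingMinors, X i

lemma eval_sliceDenom_ne_zero {v : Fin 10 → ℂ} :
    eval v sliceDenom ≠ 0 ↔ ∀ i ∈ leadingMinors, v i ≠ 0 := by
  simp only [sliceDenom, map_prod, eval_X, Finset.prod_ne_zero_iff]

lemma exists_sliceDenom_mul_eq_eval (s : (Fin 3 × Fin 3) ⊕ (Fin 3 × Fin 3)) :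
    ∃ p : MvPolynomial (Fin 10) ℂ, ∀ v, eval v sliceDenom ≠ 0 →
      eval v sliceDenom * point (sliceX v) (sliceY v) s = eval v p := by
  have hdenom : sliceDenom = X 0 * X 2 * X 3 * X 6 := by
    simp [sliceDenom, leadingMinors, mul_assoc]
  let numX : Matrix (Fin 3) (Fin 3) (MvPolynomial (Fin 10) ℂ) :=
    !![sliceDenom * X 3, 0, 0;
      0, X 0 * X 2 * X 6 ^ 2, 0;
      0, 0, X 0 * X 2 * X 3 * X 8]
  let numY : Matrix (Fin 3) (Fin 3) (MvPolynomial (Fin 10) ℂ) :=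
    !![sliceDenom * X 0, 0, 0;
      X 0 * X 2 * X 6 * X 4, X 2 ^ 2 * X 3 * X 6, 0;
      X 0 * X 2 * X 3 * X 7, X 2 * X 3 * X 9, X 0 * X 3 * X 6 * X 1]
  refine ⟨Sum.elim (fun p ↦ numX p.1 p.2) (fun p ↦ numY p.1 p.2) s, fun v hv ↦ ?_⟩
  rw [eval_sliceDenom_ne_zero] at hv
  have h0 : v 0 ≠ 0 := hv 0 (by decide)
  have h2 : v 2 ≠ 0 := hv 2 (by decide)
  have h3 : v 3 ≠ 0 := hv 3 (by decide)
  have h6 : v 6 ≠ 0 := hv 6 (by decide)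
  rcases s with ⟨i, j⟩ | ⟨i, j⟩ <;> fin_cases i <;> fin_cases j <;>
    simp [point, sliceX, sliceY, numX, numY, hdenom] <;> field_simp

lemma exists_pow_mul_mem_range {f : MV 3} (hf : f ∈ TA 3) :
    ∃ n : ℕ, (∏ i ∈ leadingMinors, generator i) ^ n * f ∈
      (aeval generator : MvPolynomial (Fin 10) ℂ →ₐ[ℂ] MV 3).range := by
  obtain ⟨n, P, hP⟩ := exists_pow_mul_eval_eq sliceDenom _ exists_sliceDenom_mul_eq_eval f
  have hdenom : aeval generator sliceDenom = ∏ i ∈ leadingMinors, generator i := by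
    simp only [sliceDenom, map_prod, aeval_X]
  have hne : ∏ i ∈ leadingMinors, generator i ≠ 0 :=
    Finset.prod_ne_zero_iff.2 fun _ ↦ generator_ne_zero
  refine ⟨n, P, eq_of_eval_eq_of_eval_ne_zero hne fun p hp ↦ ?_⟩
  obtain ⟨A, B, rfl⟩ := point_surjective p
  rw [← hdenom] at hp ⊢
  rw [eval_point_aeval_generator] at hp
  change eval _ (aeval generator P) = _
  rw [eval_point_aeval_generator, ← hP _ hp, map_mul, map_pow, eval_point_aeval_generator,
    eval_slice_eq hf (eval_sliceDenom_ne_zero.1 hp)]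

/-- The relation `g₅ g₁₀ = g₁ g₆ g₇ + g₃ g₄ g₈` among the generators: the equation satisfied by
the image of the quotient map `values`. -/
noncomputable def relation : MvPolynomial (Fin 10) ℂ :=
  X 4 * X 9 - (X 0 * X 5 * X 6 + X 2 * X 3 * X 7)

lemma eval_relation (v : Fin 10 → ℂ) :
    eval v relation = v 4 * v 9 - (v 0 * v 5 * v 6 + v 2 * v 3 * v 7) := by
  simp only [relation, map_sub, map_add, map_mul, eval_X]

lemma relation_mem_ker : relation ∈ RingHom.ker (aeval (R := ℂ) generator) := by
  rw [RingHom.mem_ker, relation]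
  simp only [map_sub, map_add, map_mul, aeval_X]
  change g5 * g10 - (g1 * g6 * g7 + g3 * g4 * g8) = 0
  simp only [g1, g3, g4, g5, g6, g7, g8, g10, D2, Matrix.det_fin_three, Matrix.of_apply,
    Matrix.cons_val]
  ring

lemma exists_values_eq {i : Fin 10} (hi : i ∈ leadingMinors) {v : Fin 10 → ℂ} (hv : v i = 0)
    (hne : ∀ j ≠ i, j ≠ 9 → v j ≠ 0) (hrel : eval v relation = 0) :
    ∃ A B, values A B = v := by
  have h4 : v 4 ≠ 0 := hne 4 (by rintro rfl; exact absurd hi (by decide)) (by decide)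
  have h9 : v 9 = (v 0 * v 5 * v 6 + v 2 * v 3 * v 7) / v 4 := by
    rw [eval_relation] at hrel
    rw [eq_div_iff h4]
    linear_combination hrel
  simp only [leadingMinors, Finset.mem_insert, Finset.mem_singleton] at hi
  -- The matrix without the vanishing minor is chosen diagonal; the nonzero entries of the
  -- other matrix are then solved for from `v`.
  rcases hi with rfl | rfl | rfl | rfl
  on_goal 1 => refine ⟨sliceX v,
    !![0, -v 2 * v 3 / v 4, 0; v 4 / v 3, 0, 0; v 7 / v 6, v 5 / v 4, v 1 / v 2], ?_⟩
  on_goal 2 => refine ⟨sliceX v,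
    !![v 0, 0, 0; v 4 / v 3, 0, -v 1 * v 4 / (v 5 * v 0); v 7 / v 6, v 5 / v 4, 0], ?_⟩
  on_goal 3 => refine ⟨
    !![0, v 6 * v 0 / v 4, 0; -v 4 / v 0, 0, 0; v 5 / v 2, -v 7 / v 4, v 8 / v 6],
    !![v 0, 0, 0; 0, v 2 / v 0, 0; 0, 0, v 1 / v 2], ?_⟩
  on_goal 4 => refine ⟨
    !![v 3, 0, 0; -v 4 / v 0, 0, v 8 * v 4 / (v 7 * v 3); v 5 / v 2, -v 7 / v 4, 0],
    !![v 0, 0, 0; 0, v 2 / v 0, 0; 0, 0, v 1 / v 2], ?_⟩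
  all_goals
    rw [values_eq]
    funext j
    fin_cases j <;> simp [sliceX, Matrix.det_fin_three, hv, h9] <;>
      field_simp (disch := simp [hne])

lemma exists_relation_mod_X {i : Fin 10} (hi : i ∈ leadingMinors) :
    ∃ m ∈ supported ℂ ({i, 9}ᶜ : Set (Fin 10)),
      ¬X 4 ∣ m ∧ X i ∣ relation - (X 4 * X 9 - m) := by
  have hmonomial : ∀ j k l : Fin 10, 4 ∉ [j, k, l] → i ∉ [j, k, l] → 9 ∉ [j, k, l] →
      X j * X k * X l ∈ supported ℂ ({i, 9}ᶜ : Set (Fin 10)) ∧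
        ¬(X 4 : MvPolynomial (Fin 10) ℂ) ∣ X j * X k * X l := by
    intro j k l h4 hijkl h9
    constructor
    · refine mul_mem (mul_mem ?_ ?_) ?_ <;> refine X_mem_supported.2 ?_ <;> grind
    · simp only [X_prime.dvd_mul, X_dvd_X]
      grind
  simp only [leadingMinors, Finset.mem_insert, Finset.mem_singleton] at hi
  have hdvd₀₆ : ∀ j : Fin 10, (X j : MvPolynomial (Fin 10) ℂ) ∣ X 0 * X 5 * X 6 →
      X j ∣ relation - (X 4 * X 9 - X 2 * X 3 * X 7) := by
    intro j h
    convert h.neg_right using 1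
    rw [relation]
    ring
  have hdvd₂₃ : ∀ j : Fin 10, (X j : MvPolynomial (Fin 10) ℂ) ∣ X 2 * X 3 * X 7 →
      X j ∣ relation - (X 4 * X 9 - X 0 * X 5 * X 6) := by
    intro j h
    convert h.neg_right using 1
    rw [relation]
    ring
  rcases hi with rfl | rfl | rfl | rfl
  · obtain ⟨hm, h4⟩ := hmonomial 2 3 7 (by decide) (by decide) (by decide)
    exact ⟨_, hm, h4, hdvd₀₆ 0 (by simp [X_prime.dvd_mul])⟩
  · obtain ⟨hm, h4⟩ := hmonomial 0 5 6 (by decide) (by decide) (by decide)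
    exact ⟨_, hm, h4, hdvd₂₃ 2 (by simp [X_prime.dvd_mul])⟩
  · obtain ⟨hm, h4⟩ := hmonomial 0 5 6 (by decide) (by decide) (by decide)
    exact ⟨_, hm, h4, hdvd₂₃ 3 (by simp [X_prime.dvd_mul])⟩
  · obtain ⟨hm, h4⟩ := hmonomial 2 3 7 (by decide) (by decide) (by decide)
    exact ⟨_, hm, h4, hdvd₀₆ 6 (by simp [X_prime.dvd_mul])⟩

lemma mem_span_X_sup_ker {i : Fin 10} (hi : i ∈ leadingMinors) {F : MvPolynomial (Fin 10) ℂ}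
    (hF : generator i ∣ aeval generator F) :
    F ∈ Ideal.span {X i} ⊔ RingHom.ker (aeval (R := ℂ) generator) := by
  have hvanish : ∀ v : Fin 10 → ℂ, v i = 0 → (∀ j ≠ i, j ≠ 9 → v j ≠ 0) →
      eval v relation = 0 → eval v F = 0 := by
    intro v hv hne hrel
    obtain ⟨A, B, rfl⟩ := exists_values_eq hi hv hne hrel
    obtain ⟨f, hf⟩ := hF
    rw [← eval_point_aeval_generator, hf, map_mul]
    exact mul_eq_zero_of_left hv _
  obtain ⟨m, hm, h4m, hrel⟩ := exists_relation_mod_X hi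
  have h4 : i ≠ 4 := by rintro rfl; exact absurd hi (by decide)
  have h9 : i ≠ 9 := by rintro rfl; exact absurd hi (by decide)
  have hle : Ideal.span {relation} ≤ RingHom.ker (aeval (R := ℂ) generator) :=
    (Ideal.span_singleton_le_iff_mem _).2 relation_mem_ker
  exact sup_le_sup_left hle _
    (mem_span_X_sup_span_of_eval_eq_zero h4 h9 (by decide) hm h4m hrel hvanish)

lemma le_range_aeval_generator :
    TA 3 ≤ (aeval generator : MvPolynomial (Fin 10) ℂ →ₐ[ℂ] MV 3).range := by
  intro f hf
  obtain ⟨n, hn⟩ := exists_pow_mul_mem_range hf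
  have hsat : ∀ i ∈ leadingMinors, generator i ∈ saturators (aeval (R := ℂ) generator).range := by
    intro i hi
    rw [← aeval_X (R := ℂ) generator i]
    exact map_mem_saturators_range _ (by rw [aeval_X]; exact generator_ne_zero hi)
      fun _ h ↦ mem_span_X_sup_ker hi (by rwa [aeval_X] at h)
  exact mem_saturators.1 (pow_mem (prod_mem hsat) n) f hn

lemma range_generator :
    Set.range generator = {g1, g2, g3, g4, g5, g6, g7, g8, g9, g10} := by
  simp only [generator, Matrix.range_cons, Matrix.range_empty, Set.union_empty,
    Set.singleton_union]

end TA

/-- The `GL(3)` tensor product algebra `TA(3)` is generated as a `ℂ`-algebra by the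
ten polynomials `g₁, ..., g₁₀`. -/
theorem TA3_generators :
    Algebra.adjoin ℂ ({g1, g2, g3, g4, g5, g6, g7, g8, g9, g10} : Set (MV 3)) = TA 3 := by
  rw [← TA.range_generator]
  refine le_antisymm (Algebra.adjoin_le ?_) ?_
  · rintro _ ⟨j, rfl⟩
    exact TA.generator_mem j
  · rw [Algebra.adjoin_range_eq_range_aeval]
    exact TA.le_range_aeval_generator
end

section
/- Let g_1, ..., g_10 be the ten generators of TA(3) (listed in the context) and let ψ : C[z_1, ..., z_10] → C[M_3 ⊕ M_3] be the C-algebra homomorphism sending z_i to g_i. Then the kernel of ψ is the ideal generated by the single polynomial z_1 z_6 z_7 − z_5 z_10 + z_3 z_4 z_8. In particular TA(3) is isomorphic as a C-algebra to C[z_1, ..., z_10] / ⟨z_1 z_6 z_7 − z_5 z_10 + z_3 z_4 z_8⟩. -/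
open MvPolynomial

/-- The `ℂ`-algebra homomorphism `ψ : ℂ[z₁, ..., z₁₀] → ℂ[M₃ ⊕ M₃]` sending
`z_i` to `g_i`. -/
noncomputable def ψ : MvPolynomial (Fin 10) ℂ →ₐ[ℂ] MV 3 :=
  aeval ![g1, g2, g3, g4, g5, g6, g7, g8, g9, g10]

/-! Let `F` be the relation. It is prime, and every point of `V(F)` with `z₁z₃z₄z₇ ≠ 0` is the value
of the generators at an explicit pair (diagonal, lower triangular), so a polynomial killed by `ψ`
vanishes on a dense open subset of `V(F)`: by the Nullstellensatz `ker ψ = (F)`.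

For the range, where `g₁g₃g₄g₇ ≠ 0` the group moves every pair of matrices to the pair determined by
its generator values, so an invariant times a power of `g₁g₃g₄g₇` is a polynomial in the generators.
The factors `g₁`, `g₃`, `g₄`, `g₇` can then be cancelled one at a time: for the corresponding `z`,
`F` is still prime modulo `z`, and a general point of `V(z, F)` is again a value of the generators,
so a `p` for which `ψ(z)` divides `ψ(p)` vanishes there and lies in `(z, F)`.
-/

section Polynomials

variable {R σ τ k : Type*}

lemma mem_of_eval_eq_zero_of_notMem [Field k] [IsAlgClosed k] [Finite σ]
    {P : Ideal (MvPolynomial σ k)} [P.IsPrime] {t p : MvPolynomial σ k} (ht : t ∉ P)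
    (h : ∀ w ∈ zeroLocus k P, eval w t ≠ 0 → eval w p = 0) : p ∈ P := by
  have hpt : p * t ∈ vanishingIdeal k (zeroLocus k P) := by
    intro w hw
    by_cases hwt : eval w t = 0
    · simp [aeval_eq_eval, hwt]
    · simp [aeval_eq_eval, h w hw hwt]
  rw [IsPrime.vanishingIdeal_zeroLocus] at hpt
  exact (Ideal.IsPrime.mem_or_mem ‹_› hpt).resolve_right ht

lemma notMem_of_mem_zeroLocus [Field k] {I : Ideal (MvPolynomial σ k)} {w : σ → k}
    {t : MvPolynomial σ k} (hw : w ∈ zeroLocus k I) (ht : eval w t ≠ 0) : t ∉ I :=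
  fun hI => ht (by simpa [aeval_eq_eval] using hw t hI)

lemma not_X_dvd_of_eval_ne_zero [CommSemiring R] {i : σ} {f : MvPolynomial σ R} {w : σ → R}
    (hw : w i = 0) (hf : eval w f ≠ 0) : ¬ X i ∣ f := by
  rintro ⟨q, rfl⟩
  simp [hw] at hf

lemma prime_sub_X_mul_X [CommRing R] [IsDomain R] [UniqueFactorizationMonoid R] {i j : σ}
    (hij : i ≠ j) {f : MvPolynomial σ R} (hj : f ∈ supported R {j}ᶜ) (hi : ¬ X i ∣ f) :
    Prime (f - X i * X j) := by
  have hjf : j ∉ f.vars := fun h => mem_supported.1 hj h rfl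
  have hrel : IsRelPrime (-X i) f :=
    IsRelPrime.neg_left ((X_prime.irreducible.isRelPrime_iff_not_dvd).2 hi)
  rw [sub_eq_neg_add, ← neg_mul, ← irreducible_iff_prime]
  exact irreducible_mul_X_add _ _ j (neg_ne_zero.2 (X_ne_zero i)) (by simpa using hij.symm) hjf hrel

lemma X_mul_X_mul_X_mem_supported [CommSemiring R] [Nontrivial R] {a b c : σ} {s : Set σ}
    (ha : a ∈ s) (hb : b ∈ s) (hc : c ∈ s) : (X a * X b * X c : MvPolynomial σ R) ∈ supported R s :=
  mul_mem (mul_mem (X_mem_supported.2 ha) (X_mem_supported.2 hb)) (X_mem_supported.2 hc)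

lemma prime_X_mul_X_mul_X_sub [CommRing R] [IsDomain R] [UniqueFactorizationMonoid R]
    {a b c i j : σ} (hij : i ≠ j) (ha : a ∉ ({i, j} : Set σ)) (hb : b ∉ ({i, j} : Set σ))
    (hc : c ∉ ({i, j} : Set σ)) : Prime (X a * X b * X c - X i * X j : MvPolynomial σ R) := by
  classical
  simp only [Set.mem_insert_iff, Set.mem_singleton_iff, not_or] at ha hb hc
  refine prime_sub_X_mul_X hij (X_mul_X_mul_X_mem_supported ?_ ?_ ?_)
    (not_X_dvd_of_eval_ne_zero (w := Function.update 1 i 0) (by simp) ?_) <;> simp [*]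

lemma exists_pow_mul_eval_eq_s16 [CommSemiring k] (d : MvPolynomial τ k)
    {s : (τ → k) → σ → k} {P : σ → MvPolynomial τ k}
    (hs : ∀ i w, eval w d ≠ 0 → eval w d * s w i = eval w (P i)) (f : MvPolynomial σ k) :
    ∃ (N : ℕ) (Q : MvPolynomial τ k), ∀ w, eval w d ≠ 0 →
      eval w d ^ N * eval (s w) f = eval w Q := by
  induction f using MvPolynomial.induction_on with
  | C a => exact ⟨0, C a, by simp⟩
  | add f g hf hg =>
    obtain ⟨N, Q, hQ⟩ := hf
    obtain ⟨M, T, hT⟩ := hg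
    refine ⟨N + M, Q * d ^ M + T * d ^ N, fun w hw => ?_⟩
    simp only [map_add, map_mul, map_pow, ← hQ w hw, ← hT w hw]
    ring
  | mul_X f i hf =>
    obtain ⟨N, Q, hQ⟩ := hf
    refine ⟨N + 1, Q * P i, fun w hw => ?_⟩
    simp only [map_mul, eval_X, ← hQ w hw, ← hs i w hw]
    ring

variable [DecidableEq σ] [CommRing R]

/-- The substitution `X i ↦ 0`, as an endomorphism of the polynomial ring (the variable `X i` is
kept in the target, so that the map is idempotent). -/
noncomputable def substZero (i : σ) : MvPolynomial σ R →ₐ[R] MvPolynomial σ R :=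
  aeval (Function.update X i 0)

lemma substZero_X (i j : σ) :
    substZero (R := R) i (X j) = if j = i then 0 else X j := by
  simp [substZero, Function.update_apply]

lemma X_dvd_sub_substZero (i : σ) (p : MvPolynomial σ R) : X i ∣ p - substZero i p := by
  have hcomp : (Ideal.Quotient.mkₐ R (Ideal.span {(X i : MvPolynomial σ R)})).comp (substZero i) =
      Ideal.Quotient.mkₐ R (Ideal.span {(X i : MvPolynomial σ R)}) := by
    refine algHom_ext fun j => ?_
    by_cases h : j = i
    · simp [substZero_X, h]
    · simp [substZero_X, h]
  rw [← Ideal.mem_span_singleton]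
  exact (Ideal.Quotient.mk_eq_mk_iff_sub_mem _ _).1 (DFunLike.congr_fun hcomp p).symm

lemma span_X_pair_eq_comap (i : σ) (F : MvPolynomial σ R) :
    Ideal.span {X i, F} = (Ideal.span {substZero i F}).comap (substZero i) := by
  apply le_antisymm
  · rw [Ideal.span_le, Set.insert_subset_iff, Set.singleton_subset_iff]
    exact ⟨by simp [substZero_X], Ideal.mem_span_singleton_self _⟩
  · intro p hp
    obtain ⟨a, ha⟩ := Ideal.mem_span_singleton'.1 hp
    obtain ⟨b, hb⟩ := X_dvd_sub_substZero i p
    obtain ⟨c, hc⟩ := X_dvd_sub_substZero i F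
    refine Ideal.mem_span_pair.2 ⟨b - a * c, a, ?_⟩
    linear_combination ha - hb + a * hc

lemma isPrime_span_X_pair [IsDomain R] {i : σ} {F : MvPolynomial σ R}
    (hF : Prime (substZero i F)) : (Ideal.span {X i, F}).IsPrime := by
  rw [span_X_pair_eq_comap]
  have := (Ideal.span_singleton_prime hF.ne_zero).2 hF
  exact Ideal.comap_isPrime _ _

end Polynomials

section RangeSaturation

variable {R A B : Type*} [CommRing R] [CommRing A] [CommRing B] [Algebra R A] [Algebra R B]

/-- The elements `s` such that the range of `φ` is closed under division by `φ s`. -/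
def rangeSaturation (φ : A →ₐ[R] B) : Submonoid A where
  carrier := {s | ∀ b, φ s * b ∈ φ.range → b ∈ φ.range}
  one_mem' b hb := by simpa using hb
  mul_mem' {s t} hs ht b hb := ht b (hs _ (by rwa [← mul_assoc, ← map_mul]))

lemma mem_rangeSaturation_of_dvd [IsDomain B] {φ : A →ₐ[R] B} {s F : A} (hs : φ s ≠ 0)
    (hF : φ F = 0) (h : ∀ p, φ s ∣ φ p → p ∈ Ideal.span {s, F}) : s ∈ rangeSaturation φ := by
  rintro b ⟨p, hp⟩
  replace hp : φ p = φ s * b := hp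
  obtain ⟨a, c, rfl⟩ := Ideal.mem_span_pair.1 (h p ⟨b, hp⟩)
  refine ⟨a, mul_left_cancel₀ hs ?_⟩
  simpa [hF, mul_comm] using hp

end RangeSaturation

section PairsOfMatrices

open Matrix

variable {n : ℕ}

/-- The point of `M_n ⊕ M_n` with components `A` and `B`, as an assignment of the variables. -/
def pairPoint {R : Type*} (A B : Matrix (Fin n) (Fin n) R) :
    (Fin n × Fin n) ⊕ (Fin n × Fin n) → R :=
  Sum.elim (fun p => A p.1 p.2) (fun p => B p.1 p.2)

lemma eq_of_eval_pairPoint_eq {f g : MV n}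
    (h : ∀ A B, eval (pairPoint A B) f = eval (pairPoint A B) g) : f = g := by
  refine MvPolynomial.funext fun x => ?_
  obtain ⟨A, B, rfl⟩ : ∃ A B, pairPoint A B = x :=
    ⟨of fun a b => x (Sum.inl (a, b)), of fun a b => x (Sum.inr (a, b)),
      funext fun i => by rcases i with _ | _ <;> rfl⟩
  exact h A B

lemma eval_pairPoint_act (A B u v w : Matrix (Fin n) (Fin n) ℂ) (f : MV n) :
    eval (pairPoint A B) (act n u v w f) = eval (pairPoint (uᵀ * A * v) (uᵀ * B * w)) f := by
  have hentry (M v : Matrix (Fin n) (Fin n) ℂ) (a b : Fin n) :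
      ∑ c, ∑ d, u c a * v d b * M c d = (uᵀ * M * v) a b := by
    simp only [mul_apply, transpose_apply, Finset.sum_mul]
    rw [Finset.sum_comm]
    exact Finset.sum_congr rfl fun _ _ => Finset.sum_congr rfl fun _ _ => by ring
  have hcomp : (aeval (pairPoint A B)).comp (act n u v w) =
      (aeval (pairPoint (uᵀ * A * v) (uᵀ * B * w)) : MV n →ₐ[ℂ] ℂ) := by
    refine algHom_ext ?_
    rintro (⟨a, b⟩ | ⟨a, b⟩) <;> simp [act, pairPoint, hentry]
  simpa [aeval_eq_eval] using DFunLike.congr_fun hcomp f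

lemma mem_TA_iff {f : MV n} :
    f ∈ TA n ↔ ∀ A B u v w, IsUniUpper u → IsUniUpper v → IsUniUpper w →
      eval (pairPoint (uᵀ * A * v) (uᵀ * B * w)) f = eval (pairPoint A B) f := by
  constructor
  · intro hf A B u v w hu hv hw
    rw [← eval_pairPoint_act, hf u v w hu hv hw]
  · intro h u v w hu hv hw
    refine eq_of_eval_pairPoint_eq fun A B => ?_
    rw [eval_pairPoint_act, h A B u v w hu hv hw]

lemma IsUniUpper.isUpperTriangular {u : Matrix (Fin n) (Fin n) ℂ} (hu : IsUniUpper u) :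
    u.IsUpperTriangular :=
  fun i j h => hu.2 i j h

lemma IsUniUpper.det_eq_one {u : Matrix (Fin n) (Fin n) ℂ} (hu : IsUniUpper u) : u.det = 1 := by
  simp [det_of_isUpperTriangular hu.isUpperTriangular, hu.1]

lemma isUniUpper_fin_three (a b c : ℂ) : IsUniUpper !![1, a, b; 0, 1, c; 0, 0, 1] := by
  constructor
  · intro i; fin_cases i <;> rfl
  · intro i j h; fin_cases i <;> fin_cases j <;> first | rfl | exact absurd h (by decide)

lemma exists_isUniUpper_mul_isLowerTriangular {A : Matrix (Fin 3) (Fin 3) ℂ} (h₁ : A 0 0 ≠ 0)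
    (h₂ : A 0 0 * A 1 1 - A 0 1 * A 1 0 ≠ 0) : ∃ v, IsUniUpper v ∧ (A * v).IsLowerTriangular := by
  obtain ⟨d, hd⟩ : ∃ d, d = A 0 0 * A 1 1 - A 0 1 * A 1 0 := ⟨_, rfl⟩
  rw [← hd] at h₂
  refine ⟨_, isUniUpper_fin_three (-(A 0 1 / A 0 0)) ((A 0 1 * A 1 2 - A 0 2 * A 1 1) / d)
    (-((A 0 0 * A 1 2 - A 0 2 * A 1 0) / d)), ?_⟩
  intro i j hij
  fin_cases i <;> fin_cases j <;> first | exact absurd hij (by decide) | skip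
  all_goals
    simp only [mul_apply, Fin.sum_univ_three, Fin.zero_eta, Fin.mk_one, Fin.reduceFinMk, of_apply,
      cons_val, cons_val', cons_val_fin_one]
    field_simp
  · ring
  · linear_combination A 0 2 * hd
  · linear_combination A 1 2 * hd

lemma exists_isUniUpper_transpose_mul_isUpperTriangular {A : Matrix (Fin 3) (Fin 3) ℂ}
    (h₁ : A 0 0 ≠ 0) (h₂ : A 0 0 * A 1 1 - A 0 1 * A 1 0 ≠ 0) :
    ∃ u, IsUniUpper u ∧ (uᵀ * A).IsUpperTriangular := by
  obtain ⟨u, hu, hAu⟩ := exists_isUniUpper_mul_isLowerTriangular (A := Aᵀ) h₁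
    (by simpa [mul_comm (A 1 0)] using h₂)
  have hT := hAu.transpose
  rw [transpose_mul, transpose_transpose] at hT
  exact ⟨u, hu, hT⟩

end PairsOfMatrices

section Generators

open Matrix

variable {A B u v w : Matrix (Fin 3) (Fin 3) ℂ}

/-- The point of `ℂ¹⁰` whose coordinates are the values of `g₁, …, g₁₀` at `(A, B)`. -/
def generatorValues (A B : Matrix (Fin 3) (Fin 3) ℂ) : Fin 10 → ℂ :=
  ![B 0 0,
    B.det,
    B 0 0 * B 1 1 - B 0 1 * B 1 0,
    A 0 0,
    A 0 0 * B 1 0 - B 0 0 * A 1 0,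
    (!![A 0 0, B 0 0, B 0 1; A 1 0, B 1 0, B 1 1; A 2 0, B 2 0, B 2 1]).det,
    A 0 0 * A 1 1 - A 0 1 * A 1 0,
    (!![A 0 0, A 0 1, B 0 0; A 1 0, A 1 1, B 1 0; A 2 0, A 2 1, B 2 0]).det,
    A.det,
    (!![A 0 0, A 0 1, B 0 1; A 1 0, A 1 1, B 1 1; A 2 0, A 2 1, B 2 1]).det * B 0 0 -
      (!![A 0 0, A 0 1, B 0 0; A 1 0, A 1 1, B 1 0; A 2 0, A 2 1, B 2 0]).det * B 0 1]

lemma eval_pairPoint_ψ (A B : Matrix (Fin 3) (Fin 3) ℂ) (p : MvPolynomial (Fin 10) ℂ) :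
    eval (pairPoint A B) (ψ p) = eval (generatorValues A B) p := by
  have hcomp : (aeval (pairPoint A B) : MV 3 →ₐ[ℂ] ℂ).comp ψ = aeval (generatorValues A B) := by
    refine algHom_ext fun i => ?_
    fin_cases i <;>
      simp [ψ, generatorValues, g1, g2, g3, g4, g5, g6, g7, g8, g9, g10, D2, xv, yv, pairPoint,
        det_fin_three]
  simpa [aeval_eq_eval] using DFunLike.congr_fun hcomp p

lemma ψ_X_ne_zero {i : Fin 10} (h : generatorValues A B i ≠ 0) : ψ (X i) ≠ 0 := by
  intro hi
  have := eval_pairPoint_ψ A B (X i)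
  rw [hi, map_zero, eval_X] at this
  exact h this.symm

lemma generatorValues_transpose_mul (hu : IsUniUpper u) :
    generatorValues (uᵀ * A) (uᵀ * B) = generatorValues A B := by
  have h10 := hu.2 1 0 (by decide)
  have h20 := hu.2 2 0 (by decide)
  have h21 := hu.2 2 1 (by decide)
  funext i
  fin_cases i
  on_goal 2 => simp [generatorValues, hu.det_eq_one]
  on_goal 8 => simp [generatorValues, hu.det_eq_one]
  all_goals
    simp only [generatorValues, det_fin_three, mul_apply, transpose_apply, Fin.sum_univ_three,
      hu.1, h10, h20, h21, Fin.zero_eta, Fin.reduceFinMk, of_apply, cons_val, cons_val',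
      cons_val_fin_one]
    ring

lemma generatorValues_mul (hv : IsUniUpper v) (hw : IsUniUpper w) :
    generatorValues (A * v) (B * w) = generatorValues A B := by
  have hcol {M m : Matrix (Fin 3) (Fin 3) ℂ} (hm : IsUniUpper m) (i : Fin 3) :
      (M * m) i 0 = M i 0 ∧ (M * m) i 1 = M i 0 * m 0 1 + M i 1 := by
    simp [mul_apply, Fin.sum_univ_three, hm.1, hm.2 1 0, hm.2 2 0, hm.2 2 1]
  funext i
  fin_cases i
  on_goal 2 => simp [generatorValues, hw.det_eq_one]
  on_goal 8 => simp [generatorValues, hv.det_eq_one]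
  all_goals
    simp only [generatorValues, det_fin_three, hcol hv, hcol hw, Fin.zero_eta,
      Fin.reduceFinMk, of_apply, cons_val, cons_val', cons_val_fin_one]
  all_goals ring

lemma ψ_range_le_TA : ψ.range ≤ TA 3 := by
  rintro _ ⟨p, rfl⟩
  refine mem_TA_iff.2 fun A B u v w hu hv hw => ?_
  change eval _ (ψ p) = eval _ (ψ p)
  rw [eval_pairPoint_ψ, eval_pairPoint_ψ, generatorValues_mul hv hw,
    generatorValues_transpose_mul hu]

end Generators

section Relation

/-- The defining relation `z₁z₆z₇ - z₅z₁₀ + z₃z₄z₈` among the generators of `TA(3)`, with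
zero-based indices. -/
noncomputable def relation : MvPolynomial (Fin 10) ℂ :=
  X 0 * X 5 * X 6 - X 4 * X 9 + X 2 * X 3 * X 7

lemma eval_relation (w : Fin 10 → ℂ) :
    eval w relation = w 0 * w 5 * w 6 - w 4 * w 9 + w 2 * w 3 * w 7 := by
  simp [relation]

lemma ψ_relation : ψ relation = 0 := by
  refine eq_of_eval_pairPoint_eq fun A B => ?_
  rw [eval_pairPoint_ψ, eval_relation]
  simp only [generatorValues, Matrix.det_fin_three, Matrix.of_apply, Matrix.cons_val,
    Matrix.cons_val', Matrix.cons_val_fin_one, map_zero]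
  ring

lemma prime_relation : Prime relation := by
  have h : relation = X 0 * X 5 * X 6 + X 2 * X 3 * X 7 - X 4 * X 9 := by
    rw [relation]; ring
  rw [h]
  refine prime_sub_X_mul_X (by decide) (add_mem (X_mul_X_mul_X_mem_supported ?_ ?_ ?_)
    (X_mul_X_mul_X_mem_supported ?_ ?_ ?_))
    (not_X_dvd_of_eval_ne_zero (w := Function.update 1 4 0) (by simp) ?_) <;> simp

end Relation

section NormalForm

open Matrix

/-- The first matrix of the normal form, under `U₃ × U₃ × U₃`, of the pairs whose generators take
the values `w`; only meaningful where `w 3` and `w 6` are nonzero. -/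
noncomputable def normalFormX (w : Fin 10 → ℂ) : Matrix (Fin 3) (Fin 3) ℂ :=
  !![w 3, 0, 0; 0, w 6 / w 3, 0; 0, 0, w 8 / w 6]

/-- The second matrix of the normal form, under `U₃ × U₃ × U₃`, of the pairs whose generators take
the values `w`; only meaningful where `w 0`, `w 2`, `w 3` and `w 6` are nonzero. -/
noncomputable def normalFormY (w : Fin 10 → ℂ) : Matrix (Fin 3) (Fin 3) ℂ :=
  !![w 0, 0, 0; w 4 / w 3, w 2 / w 0, 0; w 7 / w 6, w 9 / (w 6 * w 0), w 1 / w 2]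

/-- The product of the denominators occurring in the normal form. -/
noncomputable def normalFormDenom : MvPolynomial (Fin 10) ℂ := X 0 * X 2 * X 3 * X 6

lemma eval_normalFormDenom_ne_zero {w : Fin 10 → ℂ} :
    eval w normalFormDenom ≠ 0 ↔ w 0 ≠ 0 ∧ w 2 ≠ 0 ∧ w 3 ≠ 0 ∧ w 6 ≠ 0 := by
  simp [normalFormDenom, and_assoc]

lemma generatorValues_normalForm {w : Fin 10 → ℂ} (hrel : eval w relation = 0)
    (hw : eval w normalFormDenom ≠ 0) :
    generatorValues (normalFormX w) (normalFormY w) = w := by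
  rw [eval_relation] at hrel
  obtain ⟨h0, h2, h3, h6⟩ := eval_normalFormDenom_ne_zero.1 hw
  funext i
  fin_cases i <;>
    simp only [generatorValues, normalFormX, normalFormY, det_fin_three, Fin.zero_eta, Fin.mk_one,
      Fin.reduceFinMk, of_apply, cons_val, cons_val', cons_val_fin_one] <;>
    field_simp <;> ring_nf
  linear_combination -w 3 * hrel

lemma normalForm_generatorValues {A B : Matrix (Fin 3) (Fin 3) ℂ} (hAl : A.IsLowerTriangular)
    (hAu : A.IsUpperTriangular) (hB : B.IsLowerTriangular)
    (hw : eval (generatorValues A B) normalFormDenom ≠ 0) :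
    normalFormX (generatorValues A B) = A ∧ normalFormY (generatorValues A B) = B := by
  have a01 : A 0 1 = 0 := hAl (by decide)
  have a02 : A 0 2 = 0 := hAl (by decide)
  have a12 : A 1 2 = 0 := hAl (by decide)
  have a10 : A 1 0 = 0 := hAu (by decide)
  have a20 : A 2 0 = 0 := hAu (by decide)
  have a21 : A 2 1 = 0 := hAu (by decide)
  have b01 : B 0 1 = 0 := hB (by decide)
  have b02 : B 0 2 = 0 := hB (by decide)
  have b12 : B 1 2 = 0 := hB (by decide)
  obtain ⟨h0, h2, h3, h6⟩ := eval_normalFormDenom_ne_zero.1 hw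
  simp only [generatorValues, det_fin_three, a01, b01, Matrix.cons_val, zero_mul, sub_zero]
    at h0 h2 h3 h6
  obtain ⟨-, hb11⟩ := mul_ne_zero_iff.1 h2
  obtain ⟨-, ha11⟩ := mul_ne_zero_iff.1 h6
  constructor <;>
  · ext i j
    fin_cases i <;> fin_cases j <;>
      simp only [normalFormX, normalFormY, generatorValues, det_fin_three, a01, a02, a12, a10, a20,
        a21, b01, b02, b12, Fin.zero_eta, Fin.mk_one, Fin.reduceFinMk, of_apply, cons_val,
        cons_val', cons_val_fin_one] <;>
    field_simp <;> ring

lemma exists_isUniUpper_eq_normalForm {A B : Matrix (Fin 3) (Fin 3) ℂ}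
    (h : eval (generatorValues A B) normalFormDenom ≠ 0) :
    ∃ u v w, IsUniUpper u ∧ IsUniUpper v ∧ IsUniUpper w ∧
      uᵀ * A * v = normalFormX (generatorValues A B) ∧
      uᵀ * B * w = normalFormY (generatorValues A B) := by
  obtain ⟨-, -, h3, h6⟩ := eval_normalFormDenom_ne_zero.1 h
  obtain ⟨u, hu, hA_upper⟩ := exists_isUniUpper_transpose_mul_isUpperTriangular h3 h6
  rw [← generatorValues_transpose_mul hu] at h ⊢
  obtain ⟨h0, h2, h3, h6⟩ := eval_normalFormDenom_ne_zero.1 h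
  obtain ⟨v, hv, hA_lower⟩ := exists_isUniUpper_mul_isLowerTriangular h3 h6
  obtain ⟨w, hw, hB_lower⟩ := exists_isUniUpper_mul_isLowerTriangular h0 h2
  rw [← generatorValues_mul hv hw] at h ⊢
  obtain ⟨hX, hY⟩ := normalForm_generatorValues hA_lower
    (hA_upper.mul hv.isUpperTriangular) hB_lower h
  exact ⟨u, v, w, hu, hv, hw, hX.symm, hY.symm⟩

lemma exists_pow_mul_eval_normalForm_eq (f : MV 3) :
    ∃ (N : ℕ) (Q : MvPolynomial (Fin 10) ℂ), ∀ w, eval w normalFormDenom ≠ 0 →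
      eval w normalFormDenom ^ N * eval (pairPoint (normalFormX w) (normalFormY w)) f =
        eval w Q := by
  refine exists_pow_mul_eval_eq_s16 normalFormDenom (P := pairPoint
    !![X 3 * normalFormDenom, 0, 0;
       0, X 0 * X 2 * X 6 ^ 2, 0;
       0, 0, X 0 * X 2 * X 3 * X 8]
    !![X 0 * normalFormDenom, 0, 0;
       X 0 * X 2 * X 4 * X 6, X 2 ^ 2 * X 3 * X 6, 0;
       X 0 * X 2 * X 3 * X 7, X 2 * X 3 * X 9, X 0 * X 1 * X 3 * X 6]) ?_ f
  rintro (⟨a, b⟩ | ⟨a, b⟩) w hw <;> obtain ⟨h0, h2, h3, h6⟩ := eval_normalFormDenom_ne_zero.1 hw <;>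
    fin_cases a <;> fin_cases b <;>
    simp only [normalFormX, normalFormY, normalFormDenom, pairPoint, Sum.elim_inl, Sum.elim_inr,
      map_mul, map_pow, map_zero, eval_X, Fin.zero_eta, Fin.mk_one, Fin.reduceFinMk, of_apply,
      cons_val, cons_val', cons_val_fin_one] <;>
    field_simp <;> ring

end NormalForm

section Fibres

open Matrix

variable {w : Fin 10 → ℂ}

lemma exists_generatorValues_eq_of_apply_zero_eq_zero (h0 : w 0 = 0) (hrel : eval w relation = 0)
    (h2 : w 2 ≠ 0) (h3 : w 3 ≠ 0) (h4 : w 4 ≠ 0) (h6 : w 6 ≠ 0) :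
    ∃ A B, generatorValues A B = w := by
  rw [eval_relation, h0] at hrel
  refine ⟨!![w 3, 0, 0; 0, w 6 / w 3, 0; 0, 0, w 8 / w 6],
    !![0, -w 2 * w 3 / w 4, 0; w 4 / w 3, 0, 0; w 7 / w 6, w 5 / w 4, w 1 / w 2], ?_⟩
  funext i
  fin_cases i <;>
    simp only [generatorValues, det_fin_three, h0, Fin.zero_eta, Fin.mk_one, Fin.reduceFinMk,
      of_apply, cons_val, cons_val', cons_val_fin_one] <;>
    field_simp <;> ring_nf
  linear_combination w 6 * hrel

lemma exists_generatorValues_eq_of_apply_two_eq_zero (h2 : w 2 = 0) (hrel : eval w relation = 0)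
    (h0 : w 0 ≠ 0) (h3 : w 3 ≠ 0) (h6 : w 6 ≠ 0) (h9 : w 9 ≠ 0) :
    ∃ A B, generatorValues A B = w := by
  rw [eval_relation, h2] at hrel
  refine ⟨!![w 3, 0, 0; 0, w 6 / w 3, 0; 0, 0, w 8 / w 6],
    !![w 0, 0, 0; w 4 / w 3, 0, -w 1 * w 6 / w 9; w 7 / w 6, w 9 / (w 6 * w 0), 0], ?_⟩
  funext i
  fin_cases i <;>
    simp only [generatorValues, det_fin_three, h2, Fin.zero_eta, Fin.mk_one, Fin.reduceFinMk,
      of_apply, cons_val, cons_val', cons_val_fin_one] <;>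
    field_simp <;> ring_nf
  linear_combination -w 3 * hrel

-- Where `w 3` or `w 6` vanishes, it is the second matrix, not the first, that can be diagonalized.
lemma exists_generatorValues_eq_of_apply_three_eq_zero (h3 : w 3 = 0) (hrel : eval w relation = 0)
    (h0 : w 0 ≠ 0) (h2 : w 2 ≠ 0) (h4 : w 4 ≠ 0) (h6 : w 6 ≠ 0) :
    ∃ A B, generatorValues A B = w := by
  rw [eval_relation, h3] at hrel
  refine ⟨!![0, w 6 * w 0 / w 4, 0; -w 4 / w 0, 0, 0; w 5 / w 2, -w 7 / w 4, w 8 / w 6],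
    !![w 0, 0, 0; 0, w 2 / w 0, 0; 0, 0, w 1 / w 2], ?_⟩
  funext i
  fin_cases i <;>
    simp only [generatorValues, det_fin_three, h3, Fin.zero_eta, Fin.mk_one, Fin.reduceFinMk,
      of_apply, cons_val, cons_val', cons_val_fin_one] <;>
    field_simp <;> ring_nf
  linear_combination w 2 * hrel

lemma exists_generatorValues_eq_of_apply_six_eq_zero (h6 : w 6 = 0) (hrel : eval w relation = 0)
    (h0 : w 0 ≠ 0) (h2 : w 2 ≠ 0) (h3 : w 3 ≠ 0) (h4 : w 4 ≠ 0) (h7 : w 7 ≠ 0) :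
    ∃ A B, generatorValues A B = w := by
  rw [eval_relation, h6] at hrel
  refine ⟨!![w 3, 0, 0; -w 4 / w 0, 0, w 8 * w 4 / (w 3 * w 7); w 5 / w 2, -w 7 / w 4, 0],
    !![w 0, 0, 0; 0, w 2 / w 0, 0; 0, 0, w 1 / w 2], ?_⟩
  funext i
  fin_cases i <;>
    simp only [generatorValues, det_fin_three, h6, Fin.zero_eta, Fin.mk_one, Fin.reduceFinMk,
      of_apply, cons_val, cons_val', cons_val_fin_one] <;>
    field_simp <;> ring_nf
  linear_combination w 0 * w 2 * hrel

end Fibres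

lemma ker_ψ : RingHom.ker ψ = Ideal.span {relation} := by
  have hprime := (Ideal.span_singleton_prime prime_relation.ne_zero).2 prime_relation
  apply le_antisymm
  · intro p hp
    have hdenom : normalFormDenom ∉ Ideal.span {relation} := by
      refine notMem_of_mem_zeroLocus (w := ![1, 1, 1, 1, 1, 0, 1, 1, 1, 1]) ?_ ?_
      · simp [zeroLocus_span, aeval_eq_eval, eval_relation]
      · simp [normalFormDenom]
    refine mem_of_eval_eq_zero_of_notMem hdenom fun w hw hdw => ?_
    have hrel : eval w relation = 0 := by simpa [zeroLocus_span, aeval_eq_eval] using hw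
    rw [← generatorValues_normalForm hrel hdw, ← eval_pairPoint_ψ, RingHom.mem_ker.1 hp, map_zero]
  · simpa [Ideal.span_le] using ψ_relation

lemma X_mem_rangeSaturation_ψ {i : Fin 10} (hi : generatorValues 1 1 i ≠ 0)
    (hprime : Prime (substZero i relation)) (hrel : eval (Function.update 1 i 0) relation = 0)
    (hsurj : ∀ w, w i = 0 → eval w relation = 0 → (∀ j ≠ i, w j ≠ 0) →
      ∃ A B, generatorValues A B = w) : X i ∈ rangeSaturation ψ := by
  refine mem_rangeSaturation_of_dvd (ψ_X_ne_zero hi) ψ_relation ?_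
  rintro p ⟨f, hp⟩
  have := isPrime_span_X_pair hprime
  have hmem (w : Fin 10 → ℂ) : w ∈ zeroLocus ℂ (Ideal.span {X i, relation}) ↔
      w i = 0 ∧ eval w relation = 0 := by
    simp [zeroLocus_span, aeval_eq_eval]
  have hprod : ∏ j ∈ Finset.univ.erase i, X j ∉ Ideal.span {X i, relation} :=
    notMem_of_mem_zeroLocus ((hmem (Function.update 1 i 0)).2 ⟨by simp, hrel⟩)
      (by simp +contextual [Finset.prod_ne_zero_iff])
  refine mem_of_eval_eq_zero_of_notMem hprod fun w hw hne => ?_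
  obtain ⟨hwi, hwrel⟩ := (hmem w).1 hw
  obtain ⟨A, B, rfl⟩ := hsurj w hwi hwrel (by simpa [Finset.prod_ne_zero_iff] using hne)
  rw [← eval_pairPoint_ψ, hp, map_mul, eval_pairPoint_ψ, eval_X, hwi, zero_mul]

lemma normalFormDenom_mem_rangeSaturation_ψ : normalFormDenom ∈ rangeSaturation ψ := by
  have h0 : X 0 ∈ rangeSaturation ψ := by
    refine X_mem_rangeSaturation_ψ (by simp [generatorValues]) ?_ (by simp [eval_relation])
      fun w hw hrel hne => exists_generatorValues_eq_of_apply_zero_eq_zero hw hrel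
        (hne 2 (by decide)) (hne 3 (by decide)) (hne 4 (by decide)) (hne 6 (by decide))
    rw [show substZero 0 relation = X 2 * X 3 * X 7 - X 4 * X 9 by
      simp [relation, substZero_X, neg_add_eq_sub]]
    exact prime_X_mul_X_mul_X_sub (by decide) (by simp) (by simp) (by simp)
  have h2 : X 2 ∈ rangeSaturation ψ := by
    refine X_mem_rangeSaturation_ψ (by simp [generatorValues]) ?_ (by simp [eval_relation])
      fun w hw hrel hne => exists_generatorValues_eq_of_apply_two_eq_zero hw hrel
        (hne 0 (by decide)) (hne 3 (by decide)) (hne 6 (by decide)) (hne 9 (by decide))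
    rw [show substZero 2 relation = X 0 * X 5 * X 6 - X 4 * X 9 by
      simp [relation, substZero_X]]
    exact prime_X_mul_X_mul_X_sub (by decide) (by simp) (by simp) (by simp)
  have h3 : X 3 ∈ rangeSaturation ψ := by
    refine X_mem_rangeSaturation_ψ (by simp [generatorValues]) ?_ (by simp [eval_relation])
      fun w hw hrel hne => exists_generatorValues_eq_of_apply_three_eq_zero hw hrel
        (hne 0 (by decide)) (hne 2 (by decide)) (hne 4 (by decide)) (hne 6 (by decide))
    rw [show substZero 3 relation = X 0 * X 5 * X 6 - X 4 * X 9 by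
      simp [relation, substZero_X]]
    exact prime_X_mul_X_mul_X_sub (by decide) (by simp) (by simp) (by simp)
  have h6 : X 6 ∈ rangeSaturation ψ := by
    refine X_mem_rangeSaturation_ψ (by simp [generatorValues]) ?_ (by simp [eval_relation])
      fun w hw hrel hne => exists_generatorValues_eq_of_apply_six_eq_zero hw hrel
        (hne 0 (by decide)) (hne 2 (by decide)) (hne 3 (by decide)) (hne 4 (by decide))
        (hne 7 (by decide))
    rw [show substZero 6 relation = X 2 * X 3 * X 7 - X 4 * X 9 by
      simp [relation, substZero_X, neg_add_eq_sub]]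
    exact prime_X_mul_X_mul_X_sub (by decide) (by simp) (by simp) (by simp)
  exact mul_mem (mul_mem (mul_mem h0 h2) h3) h6

lemma TA_le_ψ_range : TA 3 ≤ ψ.range := by
  intro f hf
  obtain ⟨N, Q, hQ⟩ := exists_pow_mul_eval_normalForm_eq f
  refine pow_mem normalFormDenom_mem_rangeSaturation_ψ (N + 1) f ⟨normalFormDenom * Q, ?_⟩
  change ψ (normalFormDenom * Q) = _
  refine eq_of_eval_pairPoint_eq fun A B => ?_
  simp only [map_mul, map_pow, eval_pairPoint_ψ]
  by_cases hd : eval (generatorValues A B) normalFormDenom = 0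
  · simp [hd]
  · obtain ⟨u, v, w, hu, hv, hw, hA, hB⟩ := exists_isUniUpper_eq_normalForm hd
    rw [← mem_TA_iff.1 hf A B u v w hu hv hw, hA, hB, ← hQ _ hd]
    ring

/-- The kernel of `ψ` is the principal ideal generated by
`z₁z₆z₇ - z₅z₁₀ + z₃z₄z₈` (here `z_i` is `X (i-1)`); in particular `TA(3)` is
isomorphic as a `ℂ`-algebra to `ℂ[z₁, ..., z₁₀] / ⟨z₁z₆z₇ - z₅z₁₀ + z₃z₄z₈⟩`. -/
theorem TA3_presentation :
    RingHom.ker ψ =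
      Ideal.span {(X 0 * X 5 * X 6 - X 4 * X 9 + X 2 * X 3 * X 7 :
        MvPolynomial (Fin 10) ℂ)} ∧
    Nonempty ((MvPolynomial (Fin 10) ℂ ⧸
        Ideal.span {(X 0 * X 5 * X 6 - X 4 * X 9 + X 2 * X 3 * X 7 :
          MvPolynomial (Fin 10) ℂ)}) ≃ₐ[ℂ] TA 3) := by
  change RingHom.ker ψ = Ideal.span {relation} ∧
    Nonempty ((MvPolynomial (Fin 10) ℂ ⧸ Ideal.span {relation}) ≃ₐ[ℂ] TA 3)
  have hrange : ψ.range = TA 3 := le_antisymm ψ_range_le_TA TA_le_ψ_range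
  rw [← ker_ψ]
  exact ⟨rfl, ⟨(Ideal.quotientKerEquivRange ψ).trans (Subalgebra.equivOfEq _ _ hrange)⟩⟩
end
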